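/- The number of rooted quadrangulations with a general boundary of perimeter 2p and n internal faces equals q_{n,p} = ((2p)! / (p! (p-1)!)) * 3^n * (2n+p-1)! / (n! (n+p+1)!), for n >= 0 and p >= 1. -/

import Mathlib

/-- Number of orbits (cycles, including fixed points) of a permutation. -/
noncomputable def orbitCount {D : Type*} [Fintype D] (f : Equiv.Perm D) : ℕ :=
  Nat.card (Quot f.SameCycle)

/-- The size of the orbit of `d` under `f` (degree of the corresponding face). -/
noncomputable def faceDeg {D : Type*} [Fintype D] (f : Equiv.Perm D) (d : D) : ℕ :=
  Set.ncard {e | f.SameCycle d e}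

/-- A rooted planar quadrangulation with a (general) boundary of perimeter `2p`
and `n` internal faces, encoded as a rooted combinatorial map on the dart set
`Fin (4n+2p)` (there are `2n+p` edges, hence `4n+2p` darts): `σ` rotates the
darts around each vertex, `α` is the fixed-point-free involution pairing the
two darts of each edge, faces are the orbits of `σα`, the map is connected,
planarity is the Euler relation `V + F = E + 2`, there are `n + 1` faces in
total, the root face has degree `2p`, and all other faces have degree `4`. -/
structure RootedQuadWB (n p : ℕ) where
  σ : Equiv.Perm (Fin (4 * n + 2 * p))
  α : Equiv.Perm (Fin (4 * n + 2 * p))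
  root : Fin (4 * n + 2 * p)
  α_invol : ∀ d, α (α d) = d
  α_fixfree : ∀ d, α d ≠ d
  connected : ∀ d e : Fin (4 * n + 2 * p),
    ∃ g ∈ Subgroup.closure ({σ, α} : Set (Equiv.Perm (Fin (4 * n + 2 * p)))), g d = e
  euler : orbitCount σ + orbitCount (σ * α) = 2 * n + p + 2
  face_count : orbitCount (σ * α) = n + 1
  root_face : faceDeg (σ * α) root = 2 * p
  internal_faces : ∀ d, ¬ (σ * α).SameCycle root d → faceDeg (σ * α) d = 4

/-- Isomorphism of rooted maps: a relabelling of the darts conjugating `σ` to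
`σ'` and `α` to `α'` and carrying the root dart to the root dart. -/
def QuadIso {n p : ℕ} (m m' : RootedQuadWB n p) : Prop :=
  ∃ π : Equiv.Perm (Fin (4 * n + 2 * p)),
    π * m.σ = m'.σ * π ∧ π * m.α = m'.α * π ∧ π m.root = m'.root

/-!
A map with boundary is a gluing of polygons: fix the face permutation `φ = σ * α`, whose cycles are
the sides of the root face and of the internal faces, and choose the matching `α` of the sides so
that the resulting surface is a sphere, i.e. so that the Euler characteristic is maximal. Gluing the
root side (Tutte's root-edge deletion) multiplies `φ` by a transposition. If both sides lie on the
root face, that face is split in two and the other faces must be distributed between the two parts;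
otherwise the root face absorbs another face. So the number of planar gluings depends only on the
face degrees and solves a recursion. For quadrangles the recursion is verified on the boundary
series with the help of the Catalan series `R = 1 + 3 * g * R ^ 2` and `C = 1 + z * R * C ^ 2`.
Relabellings of the darts act freely on rooted maps, since an automorphism fixing the root of a
connected map is trivial; so the number of maps up to isomorphism is the number of planar gluings
times the number of rooted face permutations with the given face degrees, divided by the number of
relabellings.
-/

namespace PlanarGluing

/-- The recursion solved by the number `G n l` of planar gluings of one rooted `l`-gon with `n`
labelled `d`-gons: the root side is glued either to another side of the root polygon, which
disconnects the surface, or to one of the `d * n` sides of the other polygons. -/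
structure SatisfiesTutteRecursion (d : ℕ) (G : ℕ → ℕ → ℚ) : Prop where
  zero : ∀ n, G n 0 = if n = 0 then 1 else 0
  succ : ∀ n l, G n (l + 1) =
    (∑ b ∈ Finset.range l, ∑ ij ∈ Finset.HasAntidiagonal.antidiagonal n,
      (n.choose ij.1 : ℚ) * (G ij.1 (l - 1 - b) * G ij.2 b)) + d * n * G (n - 1) (l + (d - 1))

section Series

open PowerSeries

/-- The Catalan series evaluated at `a * X`, i.e. the solution of `f = 1 + a * X * f ^ 2`. -/
noncomputable def scaledCatalanSeries {A : Type*} [CommRing A] (a : A) : A⟦X⟧ :=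
  rescale a (map (Nat.castRingHom A) catalanSeries)

lemma scaledCatalanSeries_eq {A : Type*} [CommRing A] (a : A) :
    scaledCatalanSeries a = 1 + C a * X * scaledCatalanSeries a ^ 2 := by
  conv_lhs => rw [scaledCatalanSeries, ← catalanSeries_sq_mul_X_add_one]
  simp only [scaledCatalanSeries, map_add, map_mul, map_pow, map_X, map_one, rescale_X]
  ring

lemma coeff_scaledCatalanSeries_pow {A : Type*} [CommRing A] (a : A) (n k : ℕ) :
    coeff n (scaledCatalanSeries a ^ k) = a ^ n * ((coeff n (catalanSeries ^ k) : ℕ) : A) := by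
  rw [scaledCatalanSeries, ← map_pow, ← map_pow, coeff_rescale, coeff_map, Nat.coe_castRingHom]

lemma coeff_succ_catalanSeries_pow_succ (n k : ℕ) :
    coeff (n + 1) (catalanSeries ^ (k + 1)) =
      coeff (n + 1) (catalanSeries ^ k) + coeff n (catalanSeries ^ (k + 2)) := by
  have h : catalanSeries ^ (k + 1) = catalanSeries ^ k + X * catalanSeries ^ (k + 2) := by
    calc catalanSeries ^ (k + 1) = catalanSeries ^ k * (catalanSeries ^ 2 * X + 1) := by
          rw [catalanSeries_sq_mul_X_add_one, pow_succ]
      _ = catalanSeries ^ k + X * catalanSeries ^ (k + 2) := by ring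
  rw [h, map_add, coeff_succ_X_mul]

lemma coeff_catalanSeries_pow_mul_factorial (n k : ℕ) :
    coeff n (catalanSeries ^ (k + 1)) * (n.factorial * (n + k + 1).factorial) =
      (k + 1) * (2 * n + k).factorial := by
  induction n generalizing k with
  | zero => simp [Nat.factorial_succ]
  | succ n ih =>
    induction k with
    | zero =>
      have h := ih 1
      rw [coeff_succ_catalanSeries_pow_succ, pow_zero, coeff_one, if_neg n.succ_ne_zero, zero_add,
        zero_add, show 2 * (n + 1) + 0 = 2 * n + 1 + 1 by ring, Nat.factorial_succ n,
        Nat.factorial_succ (2 * n + 1)]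
      linear_combination (n + 1) * h
    | succ k ihk =>
      have h := ih (k + 2)
      rw [show n + 1 + k + 1 = n + k + 2 by ring,
        show 2 * (n + 1) + k = 2 * n + k + 2 by ring] at ihk
      rw [show n + (k + 2) + 1 = n + k + 3 by ring,
        show 2 * n + (k + 2) = 2 * n + k + 2 by ring] at h
      rw [coeff_succ_catalanSeries_pow_succ, show n + 1 + (k + 1) + 1 = n + k + 2 + 1 by ring,
        show 2 * (n + 1) + (k + 1) = 2 * n + k + 2 + 1 by ring, Nat.factorial_succ (n + k + 2),
        Nat.factorial_succ (2 * n + k + 2)]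
      rw [Nat.factorial_succ (n + k + 2)] at h
      rw [Nat.factorial_succ n] at ihk ⊢
      linear_combination (n + k + 3) * ihk + (n + 1) * h

lemma coeff_catalanSeries_pow_eq_div (n k : ℕ) :
    ((coeff n (catalanSeries ^ (k + 1)) : ℕ) : ℚ) =
      (k + 1) * (2 * n + k).factorial / (n.factorial * (n + k + 1).factorial) := by
  rw [eq_div_iff (by positivity)]
  exact_mod_cast coeff_catalanSeries_pow_mul_factorial n k

/-- The generating series of quadrangulations with a boundary, with `X` marking half of the
perimeter and the inner variable marking internal faces. In terms of `R = 1 + 3 g R ^ 2` and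
`C = 1 + z R C ^ 2` it is `C - g R ^ 2 (C ^ 2 - C)`. -/
noncomputable def boundarySeries : ℚ⟦X⟧⟦X⟧ :=
  scaledCatalanSeries (scaledCatalanSeries 3) - C (X * scaledCatalanSeries 3 ^ 2) *
    (scaledCatalanSeries (scaledCatalanSeries 3) ^ 2 - scaledCatalanSeries (scaledCatalanSeries 3))

/-- The coefficient `q_{n,p}` of `boundarySeries`. -/
noncomputable def boundaryCoeff (n p : ℕ) : ℚ := coeff n (coeff p boundarySeries)

lemma scaledCatalanSeries_three :
    (scaledCatalanSeries 3 : ℚ⟦X⟧) = 1 + 3 * X * scaledCatalanSeries 3 ^ 2 := by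
  conv_lhs => rw [scaledCatalanSeries_eq, map_ofNat]

lemma coeff_boundarySeries (p : ℕ) :
    coeff p boundarySeries = scaledCatalanSeries 3 ^ p *
      (((coeff p (catalanSeries ^ 1) : ℕ) : ℚ⟦X⟧) - X * scaledCatalanSeries 3 ^ 2 *
        (((coeff p (catalanSeries ^ 2) : ℕ) : ℚ⟦X⟧) -
          ((coeff p (catalanSeries ^ 1) : ℕ) : ℚ⟦X⟧))) := by
  have h := coeff_scaledCatalanSeries_pow (scaledCatalanSeries (3 : ℚ)) p 1
  rw [pow_one (scaledCatalanSeries (scaledCatalanSeries 3))] at h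
  rw [boundarySeries, map_sub, coeff_C_mul, map_sub, coeff_scaledCatalanSeries_pow, h]
  ring

lemma boundaryCoeff_zero (n : ℕ) : boundaryCoeff n 0 = if n = 0 then 1 else 0 := by
  simp [boundaryCoeff, coeff_boundarySeries, coeff_one]

lemma boundaryCoeff_succ_mul_factorial (n p : ℕ) :
    boundaryCoeff n (p + 1) *
        ((p + 1).factorial * p.factorial * n.factorial * (n + p + 2).factorial) =
      (2 * (p + 1)).factorial * 3 ^ n * (2 * n + p).factorial := by
  have series_eq (b₁ b₂ : ℚ) : scaledCatalanSeries 3 ^ (p + 1) *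
      (C b₁ - X * scaledCatalanSeries 3 ^ 2 * (C b₂ - C b₁)) =
      C ((b₂ + 2 * b₁) / 3) * scaledCatalanSeries 3 ^ (p + 1) -
        C ((b₂ - b₁) / 3) * scaledCatalanSeries 3 ^ (p + 1 + 1) := by
    have h_three : C (3 : ℚ)⁻¹ * 3 = 1 := by
      rw [← map_ofNat C 3, ← map_mul, inv_mul_cancel₀ three_ne_zero, map_one]
    simp only [map_add, map_sub, map_mul, map_ofNat, div_eq_mul_inv]
    linear_combination scaledCatalanSeries (3 : ℚ) ^ (p + 1) *
      (C (3 : ℚ)⁻¹ * (C b₂ - C b₁) * scaledCatalanSeries_three +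
        (X * scaledCatalanSeries (3 : ℚ) ^ 2 * (C b₂ - C b₁) - C b₁) * h_three)
  rw [boundaryCoeff, coeff_boundarySeries, ← map_natCast C, ← map_natCast C, series_eq, map_sub,
    coeff_C_mul, coeff_C_mul, coeff_scaledCatalanSeries_pow, coeff_scaledCatalanSeries_pow,
    coeff_catalanSeries_pow_eq_div, coeff_catalanSeries_pow_eq_div, coeff_catalanSeries_pow_eq_div,
    coeff_catalanSeries_pow_eq_div]
  simp only [mul_add, mul_one, add_zero, ← add_assoc, Nat.factorial_succ]
  push_cast
  field_simp
  ring

/-- Here `scaledCatalanSeries 3 - X * scaledCatalanSeries 3 ^ 3` is the coefficient of `X` in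
`boundarySeries`. -/
lemma boundarySeries_eq :
    X * (boundarySeries - 1) = X ^ 2 * boundarySeries ^ 2 + C X * (boundarySeries - 1 -
      X * C (scaledCatalanSeries 3 - X * scaledCatalanSeries 3 ^ 3)) := by
  have hC := scaledCatalanSeries_eq (scaledCatalanSeries (3 : ℚ))
  have hR : C (scaledCatalanSeries (3 : ℚ)) = 1 + 3 * C X * C (scaledCatalanSeries 3) ^ 2 := by
    simpa only [map_add, map_mul, map_pow, map_one, map_ofNat]
      using congrArg C scaledCatalanSeries_three
  have hR₀ : C (scaledCatalanSeries (3 : ℚ)) ≠ 0 := by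
    intro h
    have := congrArg (fun f => coeff 0 (coeff 0 f)) h
    simp [scaledCatalanSeries] at this
  simp only [boundarySeries, map_mul, map_pow, map_sub]
  generalize scaledCatalanSeries (scaledCatalanSeries (3 : ℚ)) = c at *
  generalize C (scaledCatalanSeries (3 : ℚ)) = R at *
  generalize (C X : ℚ⟦X⟧⟦X⟧) = g at *
  generalize (X : ℚ⟦X⟧⟦X⟧) = z at *
  refine mul_left_cancel₀ (pow_ne_zero 2 hR₀) ?_
  -- With `k = g R ^ 2` and `u = z R`, one has `F = c (1 + k - k c)` and
  -- `F - 1 = (c - 1) (1 - k c)`.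
  obtain ⟨k, hk⟩ : ∃ k, k = g * R ^ 2 := ⟨_, rfl⟩
  obtain ⟨u, hu⟩ : ∃ u, u = z * R := ⟨_, rfl⟩
  have hRk : R = 1 + 3 * k := by rw [hk]; linear_combination hR
  have hcu : u * c ^ 2 = c - 1 := by rw [hu]; linear_combination -hC
  have key : u * R * ((c - 1) * (1 - k * c)) = u ^ 2 * (c * (1 + k - k * c)) ^ 2
      + k * ((c - 1) * (1 - k * c)) - k * u * (1 - k) := by
    linear_combination u * (c - 1) * (1 - k * c) * hRk + u * (1 + k - k * c) ^ 2 * (-hcu)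
      + k * (1 - k * c) * hcu
  rw [hk, hu] at key
  linear_combination key

lemma boundaryCoeff_succ (n p : ℕ) : boundaryCoeff n (p + 1) =
    (∑ x ∈ Finset.HasAntidiagonal.antidiagonal p, ∑ y ∈ Finset.HasAntidiagonal.antidiagonal n,
      boundaryCoeff y.1 x.1 * boundaryCoeff y.2 x.2) +
      if n = 0 then 0 else boundaryCoeff (n - 1) (p + 2) := by
  have h := congrArg (fun f => coeff n (coeff (p + 2) f)) boundarySeries_eq
  simp only [map_add, coeff_C_mul, map_sub, coeff_succ_X_mul, coeff_X_pow_mul, coeff_one, coeff_C,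
    sq boundarySeries, coeff_mul p, map_sum, Nat.add_eq_zero_iff,
    one_ne_zero, OfNat.ofNat_ne_zero, and_false, if_false, sub_zero] at h
  unfold boundaryCoeff
  rw [h]
  congr 1
  · simp only [coeff_mul]
  · rcases n with _ | n <;> simp [coeff_succ_X_mul]

/-- The closed formula for the number of planar gluings of one rooted `l`-gon and `n` labelled
squares. -/
noncomputable def squareGluingCount (n l : ℕ) : ℚ :=
  if Even l then 4 ^ n * n.factorial * boundaryCoeff n (l / 2) else 0

lemma squareGluingCount_two_mul (n j : ℕ) :
    squareGluingCount n (2 * j) = 4 ^ n * n.factorial * boundaryCoeff n j := by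
  simp [squareGluingCount]

lemma squareGluingCount_two_mul_add_one (n j : ℕ) : squareGluingCount n (2 * j + 1) = 0 := by
  simp [squareGluingCount]

lemma sum_range_two_mul_add_one_of_odd_eq_zero {M : Type*} [AddCommMonoid M] (h : ℕ → M)
    (h_odd : ∀ j, h (2 * j + 1) = 0) (q : ℕ) :
    ∑ b ∈ Finset.range (2 * q + 1), h b = ∑ j ∈ Finset.range (q + 1), h (2 * j) := by
  induction q with
  | zero => simp
  | succ q ih =>
    rw [show 2 * (q + 1) + 1 = 2 * q + 1 + 1 + 1 by ring, Finset.sum_range_succ,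
      Finset.sum_range_succ, ih, h_odd, add_zero, Finset.sum_range_succ _ (q + 1), mul_add_one]

lemma squareGluingCount_odd_succ (n q : ℕ) :
    squareGluingCount n (2 * q + 1 + 1) =
      (∑ b ∈ Finset.range (2 * q + 1), ∑ ij ∈ Finset.HasAntidiagonal.antidiagonal n,
        (n.choose ij.1 : ℚ) *
          (squareGluingCount ij.1 (2 * q + 1 - 1 - b) * squareGluingCount ij.2 b)) +
      4 * n * squareGluingCount (n - 1) (2 * q + 1 + 3) := by
  rw [sum_range_two_mul_add_one_of_odd_eq_zero _ fun j => Finset.sum_eq_zero fun k _ => by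
      rw [squareGluingCount_two_mul_add_one, mul_zero, mul_zero],
    show 2 * q + 1 + 1 = 2 * (q + 1) by ring, show 2 * q + 1 + 3 = 2 * (q + 2) by ring,
    squareGluingCount_two_mul, squareGluingCount_two_mul, boundaryCoeff_succ, mul_add]
  congr 1
  · rw [← Finset.Nat.sum_antidiagonal_swap, Finset.Nat.sum_antidiagonal_eq_sum_range_succ_mk,
      Finset.mul_sum]
    refine Finset.sum_congr rfl fun j _ => ?_
    rw [Finset.mul_sum]
    refine Finset.sum_congr rfl fun ij hij => ?_
    obtain rfl := Finset.HasAntidiagonal.mem_antidiagonal.1 hij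
    rw [Prod.swap_prod_mk, show 2 * q + 1 - 1 - 2 * j = 2 * (q - j) by omega,
      squareGluingCount_two_mul, squareGluingCount_two_mul,
      ← Nat.add_choose_mul_factorial_mul_factorial ij.1 ij.2, Nat.choose_symm_add]
    push_cast
    ring
  · rcases n with _ | n
    · simp
    · rw [if_neg n.succ_ne_zero, Nat.factorial_succ, Nat.add_sub_cancel]
      push_cast
      ring

theorem satisfiesTutteRecursion_squareGluingCount :
    SatisfiesTutteRecursion 4 squareGluingCount where
  zero n := by
    rw [← Nat.mul_zero 2, squareGluingCount_two_mul, boundaryCoeff_zero]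
    split_ifs with h <;> simp [h]
  succ n l := by
    rcases Nat.even_or_odd' l with ⟨q, rfl | rfl⟩
    · have summand_eq_zero (b) (hb : b ∈ Finset.range (2 * q)) (i j : ℕ) :
          (n.choose i : ℚ) * (squareGluingCount i (2 * q - 1 - b) * squareGluingCount j b) = 0 := by
        have hb := Finset.mem_range.1 hb
        rcases Nat.even_or_odd' b with ⟨c, rfl | rfl⟩
        · rw [show 2 * q - 1 - 2 * c = 2 * (q - 1 - c) + 1 by omega,
            squareGluingCount_two_mul_add_one, zero_mul, mul_zero]
        · rw [squareGluingCount_two_mul_add_one, mul_zero, mul_zero]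
      rw [Finset.sum_eq_zero fun b hb => Finset.sum_eq_zero fun ij _ =>
          summand_eq_zero b hb ij.1 ij.2, show 2 * q + (4 - 1) = 2 * (q + 1) + 1 by omega,
        squareGluingCount_two_mul_add_one, squareGluingCount_two_mul_add_one, mul_zero, add_zero]
    · exact squareGluingCount_odd_succ n q

end Series

open Equiv Equiv.Perm

universe u

variable {D : Type u}

section ClassCount

/-- The number of classes of an equivalence relation. -/
noncomputable def classCount (s : Setoid D) : ℕ := Nat.card (Quotient s)

/-- The number of cycles of a permutation, fixed points included. It is `orbitCount`, seen as a
`classCount` in order to compare it with coarser equivalence relations. -/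
noncomputable abbrev cycleCount (f : Perm D) : ℕ := classCount (SameCycle.setoid f)

lemma classCount_eq_one_iff [Nonempty D] {s : Setoid D} : classCount s = 1 ↔ s = ⊤ := by
  rw [classCount, Nat.card_eq_one_iff_unique, Quotient.subsingleton_iff]
  exact and_iff_left (.map (Quotient.mk s) inferInstance)

lemma sameCycle_setoid_le_iff [Finite D] {f : Perm D} {s : Setoid D} :
    SameCycle.setoid f ≤ s ↔ ∀ x, s x (f x) := by
  refine ⟨fun h x => h (sameCycle_apply_right.2 .rfl), fun h x y hxy => ?_⟩
  obtain ⟨k, rfl⟩ := hxy.exists_nat_pow_eq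
  induction k with
  | zero => exact s.refl' x
  | succ k ih =>
    rw [pow_succ', Perm.mul_apply]
    exact s.trans' (ih ⟨k, by simp⟩) (h _)

lemma sameCycle_setoid_mul_le [Finite D] (f g : Perm D) :
    SameCycle.setoid (f * g) ≤ SameCycle.setoid f ⊔ SameCycle.setoid g := by
  refine sameCycle_setoid_le_iff.2 fun x => Setoid.trans' _ (y := g x) ?_ ?_
  · exact Setoid.le_def.1 le_sup_right (sameCycle_apply_right.2 .rfl)
  · exact Setoid.le_def.1 le_sup_left (sameCycle_apply_right.2 .rfl)

lemma sameCycle_setoid_mul_sup [Finite D] (f g : Perm D) :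
    SameCycle.setoid (f * g) ⊔ SameCycle.setoid g = SameCycle.setoid f ⊔ SameCycle.setoid g := by
  refine le_antisymm (sup_le (sameCycle_setoid_mul_le f g) le_sup_right) (sup_le ?_ le_sup_right)
  have h := sameCycle_setoid_mul_le (f * g) g⁻¹
  rwa [mul_inv_cancel_right, show SameCycle.setoid g⁻¹ = SameCycle.setoid g from
    Setoid.ext fun _ _ => sameCycle_inv] at h

lemma sameCycle_setoid_mul_sup' [Finite D] (f g : Perm D) :
    SameCycle.setoid (f * g) ⊔ SameCycle.setoid f = SameCycle.setoid g ⊔ SameCycle.setoid f := by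
  refine le_antisymm (sup_le ((sameCycle_setoid_mul_le f g).trans_eq (sup_comm _ _)) le_sup_right)
    (sup_le ?_ le_sup_right)
  have h := sameCycle_setoid_mul_le f⁻¹ (f * g)
  rwa [inv_mul_cancel_left, show SameCycle.setoid f⁻¹ = SameCycle.setoid f from
    Setoid.ext fun _ _ => sameCycle_inv, sup_comm] at h

variable [DecidableEq D]

lemma sameCycle_setoid_swap_le_iff [Finite D] {a b : D} {s : Setoid D} :
    SameCycle.setoid (swap a b) ≤ s ↔ s a b := by
  refine sameCycle_setoid_le_iff.trans ⟨fun h => by simpa using h a, fun h x => ?_⟩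
  rw [swap_apply_def]
  split_ifs with ha hb
  · exact ha ▸ h
  · exact hb ▸ s.symm' h
  · exact s.refl' x

open Classical in
lemma sup_sameCycle_setoid_swap [Finite D] (s : Setoid D) (a b : D) :
    s ⊔ SameCycle.setoid (swap a b) =
      Setoid.ker fun x => if s x b then Quotient.mk s a else Quotient.mk s x := by
  set t := s ⊔ SameCycle.setoid (swap a b)
  have hst : s ≤ t := le_sup_left
  have hab : t a b := sameCycle_setoid_swap_le_iff.1 le_sup_right
  refine le_antisymm (sup_le (fun x y hxy => ?_) (sameCycle_setoid_swap_le_iff.2 ?_))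
    fun x y hxy => ?_
  · simp only [Setoid.ker_def, show s x b ↔ s y b from
      ⟨s.trans' (s.symm' hxy), s.trans' hxy⟩, Quotient.sound hxy]
  · simp only [Setoid.ker_def, s.refl' b, if_true, ite_self]
  · have out (z : D) : t z (if s z b then a else z) := by
      split_ifs with hz
      · exact t.trans' (hst hz) (t.symm' hab)
      · exact t.refl' z
    simp only [Setoid.ker_def, ← apply_ite (Quotient.mk s)] at hxy
    exact t.trans' (out x) (t.trans' (hst (Quotient.exact hxy)) (t.symm' (out y)))

lemma sup_sameCycle_setoid_swap_eq_top_iff [Finite D] {s : Setoid D} {a b : D} :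
    s ⊔ SameCycle.setoid (swap a b) = ⊤ ↔ ∀ x, s x a ∨ s x b := by
  classical
  rw [sup_sameCycle_setoid_swap, Setoid.eq_top_iff]
  simp only [Setoid.ker_def]
  refine ⟨fun h x => ?_, fun h x y => ?_⟩
  · have hxa := h x a
    by_cases hx : s x b
    · exact .inr hx
    · rw [if_neg hx, ite_self] at hxa
      exact .inl (Quotient.exact hxa)
  · have out (z : D) : (if s z b then Quotient.mk s a else Quotient.mk s z) = Quotient.mk s a := by
      split_ifs with hz
      · rfl
      · exact Quotient.sound ((h z).resolve_right hz)
    rw [out x, out y]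

lemma sup_sameCycle_setoid_swap_of_rel [Finite D] {s : Setoid D} {a b : D} (h : s a b) :
    s ⊔ SameCycle.setoid (swap a b) = s :=
  sup_eq_left.2 (sameCycle_setoid_swap_le_iff.2 h)

lemma classCount_eq_sup_swap_add_one [Finite D] {s : Setoid D} {a b : D} (h : ¬ s a b) :
    classCount s = classCount (s ⊔ SameCycle.setoid (swap a b)) + 1 := by
  classical
  have range_eq : Set.range (fun x => if s x b then Quotient.mk s a else Quotient.mk s x) =
      {Quotient.mk s b}ᶜ := by
    refine Set.Subset.antisymm (Set.range_subset_iff.2 fun x => ?_) fun q hq => ?_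
    · rw [Set.mem_compl_singleton_iff]
      by_cases hx : s x b
      · exact if_pos hx ▸ fun hab => h (Quotient.exact hab)
      · exact if_neg hx ▸ fun hxb => hx (Quotient.exact hxb)
    · induction q using Quotient.inductionOn with
      | _ x => exact ⟨x, if_neg fun hx => hq (Quotient.sound hx)⟩
  rw [sup_sameCycle_setoid_swap, classCount, classCount,
    Nat.card_congr (Setoid.quotientKerEquivRange _), range_eq, Nat.card_coe_set_eq,
    ← Set.ncard_add_ncard_compl {Quotient.mk s b}, Set.ncard_singleton, add_comm]

end ClassCount

section MulSwap

lemma iterate_ne_iterate {f : D → D} {r : D} {i j : ℕ} (hij : i < j)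
    (hj : j < Function.minimalPeriod f r) : f^[i] r ≠ f^[j] r := fun e =>
  hij.ne (Function.iterate_injOn_Iio_minimalPeriod (hij.trans hj) hj e)

variable [Finite D]

lemma mem_of_sameCycle_of_mapsTo {f : Perm D} {B : Set D} (hB : Set.MapsTo f B B) {x y : D}
    (hxy : f.SameCycle x y) (hx : x ∈ B) : y ∈ B := by
  obtain ⟨k, rfl⟩ := hxy.exists_nat_pow_eq
  rw [← iterate_eq_pow]
  exact hB.iterate k hx

lemma exists_iterate_eq_of_sameCycle {f : Perm D} {r s : D} (h : f.SameCycle r s) :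
    ∃ k < Function.minimalPeriod f r, f^[k] r = s := by
  obtain ⟨k, rfl⟩ := h.exists_nat_pow_eq
  have hr : 0 < Function.minimalPeriod f r :=
    Function.minimalPeriod_pos_of_mem_periodicPts (f.injective.mem_periodicPts r)
  exact ⟨k % Function.minimalPeriod f r, Nat.mod_lt _ hr, by
    rw [Function.iterate_mod_minimalPeriod_eq, iterate_eq_pow]⟩

variable [DecidableEq D] {f : Perm D} {r s : D}

lemma sameCycle_mul_swap_of_not_sameCycle (h : ¬ f.SameCycle r s) :
    (f * swap r s).SameCycle r s := by
  by_contra hg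
  set g := f * swap r s with hg_def
  have maps_to : Set.MapsTo f {y | f.SameCycle s y ∧ g.SameCycle r y}
      {y | f.SameCycle s y ∧ g.SameCycle r y} := by
    rintro y ⟨hsy, hry⟩
    have hyr : y ≠ r := fun e => h (e ▸ hsy).symm
    have hys : y ≠ s := fun e => hg (e ▸ hry)
    have hgy : g y = f y := by rw [hg_def, Perm.mul_apply, swap_apply_of_ne_of_ne hyr hys]
    exact ⟨sameCycle_apply_right.2 hsy, hgy ▸ sameCycle_apply_right.2 hry⟩
  have hgr : g r = f s := by rw [hg_def, Perm.mul_apply, swap_apply_left]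
  exact hg (mem_of_sameCycle_of_mapsTo maps_to (sameCycle_apply_left.2 .rfl)
    ⟨sameCycle_apply_right.2 .rfl, hgr ▸ sameCycle_apply_right.2 .rfl⟩).2

lemma sameCycle_setoid_mul_swap_of_not_sameCycle (h : ¬ f.SameCycle r s) :
    SameCycle.setoid (f * swap r s) = SameCycle.setoid f ⊔ SameCycle.setoid (swap r s) := by
  rw [← sameCycle_setoid_mul_sup,
    sup_sameCycle_setoid_swap_of_rel (sameCycle_mul_swap_of_not_sameCycle h)]

lemma cycleCount_eq_mul_swap_add_one (h : ¬ f.SameCycle r s) :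
    cycleCount f = cycleCount (f * swap r s) + 1 := by
  rw [cycleCount, cycleCount, classCount_eq_sup_swap_add_one h,
    sameCycle_setoid_mul_swap_of_not_sameCycle h]

lemma sameCycle_mul_swap_iterate_iff {k : ℕ} (hk : 0 < k)
    (hk' : k < Function.minimalPeriod f r) {x : D} :
    (f * swap r (f^[k] r)).SameCycle (f^[k] r) x ↔ ∃ i, 0 < i ∧ i ≤ k ∧ f^[i] r = x := by
  set g := f * swap r (f^[k] r) with hg_def
  have apply_last : g (f^[k] r) = f^[1] r := by
    rw [hg_def, Perm.mul_apply, swap_apply_right, Function.iterate_one]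
  have apply_iterate {i : ℕ} (hi : 0 < i) (hik : i < k) : g (f^[i] r) = f^[i + 1] r := by
    have ne_root : f^[i] r ≠ r := (iterate_ne_iterate hi (hik.trans hk')).symm
    rw [hg_def, Perm.mul_apply, swap_apply_of_ne_of_ne ne_root (iterate_ne_iterate hik hk'),
      Function.iterate_succ_apply']
  constructor
  · refine fun hx => mem_of_sameCycle_of_mapsTo (B := {x | ∃ i, 0 < i ∧ i ≤ k ∧ f^[i] r = x})
      ?_ hx ⟨k, hk, le_rfl, rfl⟩
    rintro _ ⟨i, hi, hik, rfl⟩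
    rcases hik.eq_or_lt with rfl | hik
    · exact ⟨1, one_pos, hi, apply_last.symm⟩
    · exact ⟨i + 1, i.succ_pos, hik, (apply_iterate hi hik).symm⟩
  · rintro ⟨i, hi, hik, rfl⟩
    induction i, hi using Nat.le_induction with
    | base => exact apply_last ▸ sameCycle_apply_right.2 .rfl
    | succ i hi ih =>
      exact apply_iterate hi hik ▸ sameCycle_apply_right.2 (ih (Nat.le_of_succ_le hik))

lemma not_sameCycle_mul_swap (h : f.SameCycle r s) (hrs : r ≠ s) :
    ¬ (f * swap r s).SameCycle r s := by
  obtain ⟨k, hk, rfl⟩ := exists_iterate_eq_of_sameCycle h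
  have hk₀ : 0 < k := Nat.pos_of_ne_zero fun e => hrs (by rw [e, Function.iterate_zero_apply])
  intro hg
  obtain ⟨i, hi, hik, hir⟩ := (sameCycle_mul_swap_iterate_iff hk₀ hk).1 hg.symm
  exact iterate_ne_iterate hi (hik.trans_lt hk) hir.symm

lemma cycleCount_mul_swap_eq_add_one (h : f.SameCycle r s) (hrs : r ≠ s) :
    cycleCount (f * swap r s) = cycleCount f + 1 := by
  rw [cycleCount_eq_mul_swap_add_one (not_sameCycle_mul_swap h hrs), mul_assoc, swap_mul_self,
    mul_one]

end MulSwap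

section Gluing

/-- `α` is a perfect matching of the darts in `S`, encoded as an involution whose support is
exactly `S`. -/
structure IsMatchingOn (S : Set D) (α : Perm D) : Prop where
  involutive : Function.Involutive α
  apply_ne_self_iff : ∀ x, α x ≠ x ↔ x ∈ S

/-- The connected components of the surface obtained from the faces (the cycles of `φ`) by gluing
each dart `x` to `α x`, as an equivalence relation on darts. -/
def componentSetoid (φ α : Perm D) : Setoid D := SameCycle.setoid φ ⊔ SameCycle.setoid α

/-- `α` glues the darts in `S` of the faces of `φ` to a surface all of whose components are
spheres. The Euler relation `V + F = E + 2 C` is doubled because there are `S.ncard / 2` edges; the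
darts outside `S` are not edges of the surface, as if they were contracted to points. -/
structure IsPlanarGluing (φ : Perm D) (S : Set D) (α : Perm D) : Prop
    extends IsMatchingOn S α where
  euler : 2 * (cycleCount (φ * α) + cycleCount φ) =
    S.ncard + 4 * classCount (componentSetoid φ α)

/-- `α` glues the darts in `S` of the faces of `φ` to a single sphere. -/
structure IsSphereGluing (φ : Perm D) (S : Set D) (α : Perm D) : Prop
    extends IsPlanarGluing φ S α where
  connected : componentSetoid φ α = ⊤

/-- `α` glues the darts in `S` of the faces of `φ` to two spheres, one containing `r` and the other
one containing `s`. -/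
structure IsTwoSphereGluing (φ : Perm D) (S : Set D) (r s : D) (α : Perm D) : Prop
    extends IsPlanarGluing φ S α where
  separated : ¬ componentSetoid φ α r s
  covered : ∀ x, componentSetoid φ α x r ∨ componentSetoid φ α x s

lemma componentSetoid_one [Finite D] (φ : Perm D) : componentSetoid φ 1 = SameCycle.setoid φ :=
  sup_eq_left.2 (sameCycle_setoid_le_iff.2 fun x => Setoid.refl' _ x)

lemma IsMatchingOn.apply_mem {S : Set D} {α : Perm D} (h : IsMatchingOn S α) {x : D} (hx : x ∈ S) :
    α x ∈ S := by
  rw [← h.apply_ne_self_iff, h.involutive x]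
  exact ((h.apply_ne_self_iff x).2 hx).symm

lemma isMatchingOn_empty_iff {α : Perm D} : IsMatchingOn ∅ α ↔ α = 1 := by
  constructor
  · exact fun h => Equiv.ext fun x =>
      not_not.1 ((h.apply_ne_self_iff x).not.2 (Set.notMem_empty x))
  · rintro rfl
    exact ⟨fun _ => rfl, fun x => by simp⟩

lemma ncard_sdiff_pair_add_two [Finite D] {S : Set D} {r s : D} (hr : r ∈ S) (hs : s ∈ S)
    (hrs : r ≠ s) : (S \ {r, s}).ncard + 2 = S.ncard := by
  rw [← Set.ncard_pair hrs]
  exact Set.ncard_sdiff_add_ncard_of_subset (Set.pair_subset hr hs)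

variable {S : Set D} {φ α : Perm D} {r s : D}

section RootEdge

variable [DecidableEq D]

lemma isMatchingOn_and_apply_eq_iff (hr : r ∈ S) (hs : s ∈ S) (hrs : r ≠ s) :
    IsMatchingOn S α ∧ α r = s ↔ IsMatchingOn (S \ {r, s}) (swap r s * α) := by
  constructor
  · rintro ⟨⟨hα, hS⟩, hαr⟩
    have hαs : α s = r := hαr ▸ hα r
    constructor
    · intro x
      have := hα x
      simp only [Perm.mul_apply]
      grind
    · intro x
      have := hα x
      have := hS x
      simp only [Perm.mul_apply, Set.mem_sdiff, Set.mem_insert_iff, Set.mem_singleton_iff]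
      grind
  · intro h
    set β := swap r s * α with hβ
    have hα : α = swap r s * β := by rw [hβ, swap_mul_self_mul]
    rw [hα]
    have hβr := (h.apply_ne_self_iff r)
    have hβs := (h.apply_ne_self_iff s)
    refine ⟨⟨fun x => ?_, fun x => ?_⟩, ?_⟩
    · have := h.involutive x
      simp only [Perm.mul_apply]
      grind
    · have := h.involutive x
      have := h.apply_ne_self_iff x
      simp only [Perm.mul_apply]
      grind
    · simp only [Perm.mul_apply]
      grind

lemma mul_swap_mul_swap_mul (φ α : Perm D) (r s : D) : φ * swap r s * (swap r s * α) = φ * α := by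
  rw [mul_assoc, swap_mul_self_mul]

variable [Finite D]

lemma componentSetoid_eq_sup_swap (h : α r = s) : componentSetoid φ α =
    componentSetoid (φ * swap r s) (swap r s * α) ⊔ SameCycle.setoid (swap r s) := by
  have swap_le : SameCycle.setoid (swap r s) ≤ SameCycle.setoid α :=
    sameCycle_setoid_swap_le_iff.2 (h ▸ sameCycle_apply_right.2 .rfl)
  rw [componentSetoid, componentSetoid, sup_sup_distrib_right, sameCycle_setoid_mul_sup,
    sameCycle_setoid_mul_sup', sup_eq_left.2 swap_le, sup_assoc, sup_eq_right.2 swap_le]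

lemma componentSetoid_mul_swap_of_not_sameCycle (h : α r = s) (hφ : ¬ φ.SameCycle r s) :
    componentSetoid φ α = componentSetoid (φ * swap r s) (swap r s * α) := by
  rw [componentSetoid_eq_sup_swap h, sup_sameCycle_setoid_swap_of_rel]
  exact Setoid.le_def.1 le_sup_left (sameCycle_mul_swap_of_not_sameCycle hφ)

end RootEdge

variable [Finite D]

/-- The genus of a gluing is nonnegative. -/
theorem IsMatchingOn.two_mul_cycleCount_le (h : IsMatchingOn S α) :
    2 * (cycleCount (φ * α) + cycleCount φ) ≤ S.ncard + 4 * classCount (componentSetoid φ α) := by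
  classical
  induction hN : S.ncard using Nat.strong_induction_on generalizing S φ α with
  | _ N ih =>
    subst hN
    rcases S.eq_empty_or_nonempty with rfl | ⟨r, hr⟩
    · rw [isMatchingOn_empty_iff.1 h, mul_one, componentSetoid_one, Set.ncard_empty,
        cycleCount]
      omega
    obtain ⟨s, hs⟩ : ∃ s, α r = s := ⟨_, rfl⟩
    have hsS : s ∈ S := hs ▸ h.apply_mem hr
    have hrs : r ≠ s := hs ▸ ((h.apply_ne_self_iff r).2 hr).symm
    have hcard := ncard_sdiff_pair_add_two hr hsS hrs
    have hle := ih _ (by omega) (φ := φ * swap r s)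
      ((isMatchingOn_and_apply_eq_iff hr hsS hrs).1 ⟨h, hs⟩) rfl
    rw [mul_swap_mul_swap_mul] at hle
    by_cases hφ : φ.SameCycle r s
    · have hsplit := cycleCount_mul_swap_eq_add_one hφ hrs
      rw [componentSetoid_eq_sup_swap hs]
      by_cases hK : componentSetoid (φ * swap r s) (swap r s * α) r s
      · rw [sup_sameCycle_setoid_swap_of_rel hK]
        omega
      · have := classCount_eq_sup_swap_add_one hK
        omega
    · have hmerge := cycleCount_eq_mul_swap_add_one hφ
      rw [componentSetoid_mul_swap_of_not_sameCycle hs hφ]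
      omega

variable [DecidableEq D]

lemma isSphereGluing_and_apply_eq_iff_of_not_sameCycle (hr : r ∈ S) (hs : s ∈ S)
    (hφ : ¬ φ.SameCycle r s) : IsSphereGluing φ S α ∧ α r = s ↔
      IsSphereGluing (φ * swap r s) (S \ {r, s}) (swap r s * α) := by
  have hrs : r ≠ s := fun e => hφ (e ▸ .rfl)
  have hcard := ncard_sdiff_pair_add_two hr hs hrs
  have hmerge := cycleCount_eq_mul_swap_add_one hφ
  constructor
  · rintro ⟨⟨⟨hα, heuler⟩, hconn⟩, hrsα⟩
    rw [componentSetoid_mul_swap_of_not_sameCycle hrsα hφ] at heuler hconn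
    refine ⟨⟨(isMatchingOn_and_apply_eq_iff hr hs hrs).1 ⟨hα, hrsα⟩, ?_⟩, hconn⟩
    rw [mul_swap_mul_swap_mul]
    omega
  · rintro ⟨⟨hα, heuler⟩, hconn⟩
    obtain ⟨hα, hrsα⟩ := (isMatchingOn_and_apply_eq_iff hr hs hrs).2 hα
    rw [← componentSetoid_mul_swap_of_not_sameCycle hrsα hφ] at heuler hconn
    rw [mul_swap_mul_swap_mul] at heuler
    exact ⟨⟨⟨hα, by omega⟩, hconn⟩, hrsα⟩

lemma isSphereGluing_and_apply_eq_iff_of_sameCycle (hr : r ∈ S) (hs : s ∈ S) (hrs : r ≠ s)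
    (hφ : φ.SameCycle r s) : IsSphereGluing φ S α ∧ α r = s ↔
      IsTwoSphereGluing (φ * swap r s) (S \ {r, s}) r s (swap r s * α) := by
  have hcard := ncard_sdiff_pair_add_two hr hs hrs
  have hsplit := cycleCount_mul_swap_eq_add_one hφ hrs
  constructor
  · rintro ⟨⟨⟨hα, heuler⟩, hconn⟩, hrsα⟩
    have hα' := (isMatchingOn_and_apply_eq_iff hr hs hrs).1 ⟨hα, hrsα⟩
    have hgenus := hα'.two_mul_cycleCount_le (φ := φ * swap r s)
    rw [mul_swap_mul_swap_mul] at hgenus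
    rw [componentSetoid_eq_sup_swap hrsα] at heuler hconn
    have hsep : ¬ componentSetoid (φ * swap r s) (swap r s * α) r s := by
      intro hK
      rw [sup_sameCycle_setoid_swap_of_rel hK] at heuler
      omega
    have hcount := classCount_eq_sup_swap_add_one hsep
    refine ⟨⟨hα', ?_⟩, hsep, sup_sameCycle_setoid_swap_eq_top_iff.1 hconn⟩
    rw [mul_swap_mul_swap_mul]
    omega
  · rintro ⟨⟨hα, heuler⟩, hsep, hcov⟩
    obtain ⟨hα, hrsα⟩ := (isMatchingOn_and_apply_eq_iff hr hs hrs).2 hα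
    have hcount := classCount_eq_sup_swap_add_one hsep
    have hconn := sup_sameCycle_setoid_swap_eq_top_iff.2 hcov
    rw [← componentSetoid_eq_sup_swap hrsα] at hconn hcount
    rw [mul_swap_mul_swap_mul] at heuler
    exact ⟨⟨⟨hα, by omega⟩, hconn⟩, hrsα⟩

end Gluing

section Restrict

variable {p : D → Prop} {S : Set D} {φ α : Perm D} {r s : D}

/-- The set of elements satisfying `p` is mapped onto itself by `φ`. This is the form of invariance
required by `Equiv.Perm.subtypePerm`. -/
abbrev Preserves (φ : Perm D) (p : D → Prop) : Prop := ∀ x, p (φ x) ↔ p x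

lemma Preserves.not (h : Preserves φ p) : Preserves φ fun x => ¬ p x := fun x => not_congr (h x)

lemma Preserves.mul (hφ : Preserves φ p) (hα : Preserves α p) : Preserves (φ * α) p :=
  fun x => (hφ (α x)).trans (hα x)

/-- The restriction of `φ` to the invariant set of elements satisfying `p`. -/
abbrev Preserves.restrict (h : Preserves φ p) : Perm {x // p x} := φ.subtypePerm h

/-- A permutation of `D` preserving a predicate `p` is a pair of permutations, one of the elements
satisfying `p` and one of the remaining elements. -/
noncomputable def preservingPermEquiv (p : D → Prop) :
    {α : Perm D // Preserves α p} ≃ Perm {x // p x} × Perm {x // ¬ p x} where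
  toFun α := (Preserves.restrict α.2, Preserves.restrict (Preserves.not α.2))
  invFun β := by
    classical
    refine ⟨β.1.subtypeCongr β.2, fun x => ?_⟩
    by_cases hx : p x
    · simp only [subtypeCongr.left_apply _ _ hx, (β.1 ⟨x, hx⟩).2, hx]
    · simp only [subtypeCongr.right_apply _ _ hx, (β.2 ⟨x, hx⟩).2, hx]
  left_inv α := by
    classical
    refine Subtype.ext (Equiv.ext fun x => ?_)
    by_cases hx : p x
    · exact subtypeCongr.left_apply _ _ hx
    · exact subtypeCongr.right_apply _ _ hx
  right_inv β := by
    classical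
    refine Prod.ext (Equiv.ext fun x => Subtype.ext ?_) (Equiv.ext fun x => Subtype.ext ?_)
    · exact subtypeCongr.left_apply _ _ x.2
    · exact subtypeCongr.right_apply _ _ x.2

lemma ncard_preimage_val_add [Finite D] (p : D → Prop) (S : Set D) :
    (Subtype.val ⁻¹' S : Set {x // p x}).ncard + (Subtype.val ⁻¹' S : Set {x // ¬ p x}).ncard =
      S.ncard := by
  have image_val (q : D → Prop) : Subtype.val '' (Subtype.val ⁻¹' S : Set {x // q x}) =
      S ∩ {x | q x} :=
    (Subtype.image_preimage_val {x | q x} S).trans (Set.inter_comm _ _)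
  rw [← Set.ncard_image_of_injective _ Subtype.val_injective,
    ← Set.ncard_image_of_injective (_ : Set {x // ¬ p x}) Subtype.val_injective, image_val,
    image_val, ← Set.ncard_inter_add_ncard_sdiff_eq_ncard S {x | p x}]
  rfl

lemma classCount_comap_val {t : Setoid D} (p' : Quotient t → Prop) :
    classCount (t.comap (Subtype.val : {x // p' ⟦x⟧} → D)) = Nat.card {c // p' c} :=
  Nat.card_congr
    (Equiv.subtypeQuotientEquivQuotientSubtype _ p' (fun _ => .rfl) fun _ _ => .rfl).symm

lemma classCount_comap_val_add [Finite D] {t : Setoid D} (ht : ∀ x y, t x y → (p x ↔ p y)) :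
    classCount (t.comap (Subtype.val : {x // p x} → D)) +
      classCount (t.comap (Subtype.val : {x // ¬ p x} → D)) = classCount t := by
  classical
  let p' : Quotient t → Prop := Quotient.lift p fun x y h => propext (ht x y h)
  exact (congrArg₂ _ (classCount_comap_val p') (classCount_comap_val (¬ p' ·))).trans
    (Nat.card_sum.symm.trans (Nat.card_congr (Equiv.sumCompl p')))

lemma sameCycle_setoid_restrict (hφ : Preserves φ p) :
    SameCycle.setoid hφ.restrict = (SameCycle.setoid φ).comap Subtype.val :=
  Setoid.ext fun _ _ => sameCycle_subtypePerm

lemma IsMatchingOn.restrict (h : IsMatchingOn S α) (hα : Preserves α p) :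
    IsMatchingOn (Subtype.val ⁻¹' S) hα.restrict :=
  ⟨fun x => Subtype.ext (h.involutive x), fun x => by
    rw [ne_eq, Subtype.ext_iff]
    exact h.apply_ne_self_iff x⟩

lemma isMatchingOn_of_restrict (hα : Preserves α p)
    (h₁ : IsMatchingOn (Subtype.val ⁻¹' S) hα.restrict)
    (h₂ : IsMatchingOn (Subtype.val ⁻¹' S) hα.not.restrict) :
    IsMatchingOn S α := by
  refine ⟨fun x => ?_, fun x => ?_⟩ <;> by_cases hx : p x
  · exact congrArg Subtype.val (h₁.involutive ⟨x, hx⟩)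
  · exact congrArg Subtype.val (h₂.involutive ⟨x, hx⟩)
  · exact (not_congr Subtype.ext_iff).symm.trans (h₁.apply_ne_self_iff ⟨x, hx⟩)
  · exact (not_congr Subtype.ext_iff).symm.trans (h₂.apply_ne_self_iff ⟨x, hx⟩)

variable [Finite D]

lemma componentSetoid_le_iff {t : Setoid D} :
    componentSetoid φ α ≤ t ↔ ∀ x, t x (φ x) ∧ t x (α x) := by
  rw [componentSetoid, sup_le_iff, sameCycle_setoid_le_iff, sameCycle_setoid_le_iff, forall_and]

lemma rel_iff_of_componentSetoid (hφ : Preserves φ p) (hα : Preserves α p) {x y : D}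
    (h : componentSetoid φ α x y) : p x ↔ p y :=
  iff_of_eq (componentSetoid_le_iff (t := Setoid.ker p).2
    (fun x => ⟨propext (hφ x).symm, propext (hα x).symm⟩) h)

lemma rel_iff_of_sameCycle (hφ : Preserves φ p) {x y : D} (h : φ.SameCycle x y) :
    p x ↔ p y :=
  rel_iff_of_componentSetoid hφ hφ (Setoid.le_def.1 le_sup_left h)

lemma componentSetoid_restrict (hφ : Preserves φ p) (hα : Preserves α p) :
    componentSetoid hφ.restrict hα.restrict =
      (componentSetoid φ α).comap Subtype.val := by
  classical
  set K := componentSetoid hφ.restrict hα.restrict with hK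
  have step := componentSetoid_le_iff.1 hK.ge
  refine le_antisymm (componentSetoid_le_iff.2 fun x => ?_) fun x y hxy => ?_
  · exact componentSetoid_le_iff.1 le_rfl x.1
  · have le_ker : componentSetoid φ α ≤
        Setoid.ker fun z => if hz : p z then some (Quotient.mk K ⟨z, hz⟩) else none := by
      refine componentSetoid_le_iff.2 fun z => ?_
      simp only [Setoid.ker_def, hφ, hα]
      by_cases hz : p z
      · simp only [hz, dif_pos, Option.some.injEq]
        exact ⟨Quotient.sound (step ⟨z, hz⟩).1, Quotient.sound (step ⟨z, hz⟩).2⟩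
      · simp only [hz, dif_neg, not_false_eq_true, and_self]
    have := le_ker hxy
    simp only [Setoid.ker_def, x.2, y.2, dif_pos, Option.some.injEq] at this
    exact Quotient.exact this

lemma cycleCount_restrict_add (hφ : Preserves φ p) :
    cycleCount hφ.restrict + cycleCount hφ.not.restrict =
      cycleCount φ := by
  rw [cycleCount, cycleCount, sameCycle_setoid_restrict, sameCycle_setoid_restrict]
  exact classCount_comap_val_add fun _ _ => rel_iff_of_sameCycle hφ

/-- Planarity passes to the parts because their genera are nonnegative. -/
lemma isPlanarGluing_iff_restrict (hφ : Preserves φ p) (hα : Preserves α p) :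
    IsPlanarGluing φ S α ↔
      IsPlanarGluing hφ.restrict (Subtype.val ⁻¹' S) hα.restrict ∧
      IsPlanarGluing hφ.not.restrict (Subtype.val ⁻¹' S) hα.not.restrict := by
  classical
  have faces := cycleCount_restrict_add hφ
  have vertices : cycleCount (hφ.restrict * hα.restrict) +
      cycleCount (hφ.not.restrict * hα.not.restrict) = cycleCount (φ * α) :=
    cycleCount_restrict_add (hφ.mul hα)
  have darts := ncard_preimage_val_add p S
  have components := classCount_comap_val_add (t := componentSetoid φ α)
    fun _ _ => rel_iff_of_componentSetoid hφ hα
  rw [← componentSetoid_restrict hφ hα, ← componentSetoid_restrict hφ.not hα.not] at components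
  constructor
  · rintro ⟨h, heuler⟩
    have h₁ := h.restrict hα
    have h₂ := h.restrict hα.not
    have genus₁ := h₁.two_mul_cycleCount_le (φ := hφ.restrict)
    have genus₂ := h₂.two_mul_cycleCount_le (φ := hφ.not.restrict)
    exact ⟨⟨h₁, by omega⟩, ⟨h₂, by omega⟩⟩
  · rintro ⟨⟨h₁, heuler₁⟩, ⟨h₂, heuler₂⟩⟩
    exact ⟨isMatchingOn_of_restrict hα h₁ h₂, by omega⟩

lemma isTwoSphereGluing_and_iff_restrict (hφ : Preserves φ p) (hα : Preserves α p)
    (hr : p r) (hs : ¬ p s) :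
    (IsTwoSphereGluing φ S r s α ∧ ∀ x, componentSetoid φ α x r ↔ p x) ↔
      IsSphereGluing hφ.restrict (Subtype.val ⁻¹' S) hα.restrict ∧
      IsSphereGluing hφ.not.restrict (Subtype.val ⁻¹' S) hα.not.restrict := by
  have eq_top (q : D → Prop) (hφ : Preserves φ q) (hα : Preserves α q) :
      componentSetoid hφ.restrict hα.restrict = ⊤ ↔
        ∀ x y, q x → q y → componentSetoid φ α x y := by
    rw [componentSetoid_restrict, Setoid.eq_top_iff]
    exact ⟨fun h x y hx hy => h ⟨x, hx⟩ ⟨y, hy⟩, fun h x y => h x y x.2 y.2⟩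
  constructor
  · rintro ⟨⟨hplanar, -, hcov⟩, hK⟩
    obtain ⟨h₁, h₂⟩ := (isPlanarGluing_iff_restrict hφ hα).1 hplanar
    have to_s (x : D) (hx : ¬ p x) : componentSetoid φ α x s :=
      (hcov x).resolve_left ((hK x).not.2 hx)
    exact ⟨⟨h₁, (eq_top p hφ hα).2 fun x y hx hy =>
        Setoid.trans' _ ((hK x).2 hx) (Setoid.symm' _ ((hK y).2 hy))⟩,
      ⟨h₂, (eq_top (¬ p ·) _ _).2 fun x y hx hy =>
        Setoid.trans' _ (to_s x hx) (Setoid.symm' _ (to_s y hy))⟩⟩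
  · rintro ⟨⟨h₁, hconn₁⟩, ⟨h₂, hconn₂⟩⟩
    have hK (x : D) : componentSetoid φ α x r ↔ p x :=
      ⟨fun h => (rel_iff_of_componentSetoid hφ hα h).2 hr,
        fun h => (eq_top p hφ hα).1 hconn₁ x r h hr⟩
    refine ⟨⟨(isPlanarGluing_iff_restrict hφ hα).2 ⟨h₁, h₂⟩, fun h => ?_, fun x => ?_⟩, hK⟩
    · exact hs ((hK s).1 (Setoid.symm' _ h))
    · exact (em (p x)).imp (hK x).2 fun hx => (eq_top (¬ p ·) _ _).1 hconn₂ x s hx hs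

lemma card_isTwoSphereGluing_and (hφ : Preserves φ p) (hr : p r) (hs : ¬ p s) :
    Nat.card {α // IsTwoSphereGluing φ S r s α ∧ ∀ x, componentSetoid φ α x r ↔ p x} =
      Nat.card {α // IsSphereGluing hφ.restrict (Subtype.val ⁻¹' S) α} *
      Nat.card {α // IsSphereGluing hφ.not.restrict (Subtype.val ⁻¹' S) α} := by
  have preserves {α : Perm D} (h : ∀ x, componentSetoid φ α x r ↔ p x) : Preserves α p := by
    intro x
    rw [← h, ← h]
    have := (componentSetoid_le_iff.1 (le_refl (componentSetoid φ α)) x).2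
    exact ⟨Setoid.trans' _ this, Setoid.trans' _ (Setoid.symm' _ this)⟩
  rw [← Nat.card_prod, ← Nat.card_congr Equiv.subtypeProdEquivProd]
  refine Nat.card_congr (.trans (Equiv.subtypeSubtypeEquivSubtype fun h => preserves h.2).symm
    ((preservingPermEquiv p).subtypeEquiv fun α => ?_))
  exact isTwoSphereGluing_and_iff_restrict hφ α.2 hr hs

end Restrict

section Profile

/-- The number of darts of `S` on the cycle of `x`, i.e. the number of sides still to be glued of
the face containing `x`. -/
noncomputable def openDegree (φ : Perm D) (S : Set D) (x : D) : ℕ :=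
  (S ∩ {y | φ.SameCycle x y}).ncard

/-- The cycles of `φ` are a root face, containing `r` and having `l` sides in `S`, and `n` inner
faces having `d` sides in `S` each. -/
structure HasRootedProfile (d : ℕ) (φ : Perm D) (S : Set D) (r : D) (n l : ℕ) : Prop where
  root_degree : openDegree φ S r = l
  inner_degree : ∀ x, ¬ φ.SameCycle r x → openDegree φ S x = d
  cycle_count : cycleCount φ = n + 1

/-- The cycles of `φ` are two distinct root faces, containing `r` and `s` and having `a` and `b`
sides in `S`, and `n` inner faces having `d` sides in `S` each. -/
structure HasTwoRootedProfile (d : ℕ) (φ : Perm D) (S : Set D) (r s : D) (n a b : ℕ) : Prop where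
  separated : ¬ φ.SameCycle r s
  left_degree : openDegree φ S r = a
  right_degree : openDegree φ S s = b
  inner_degree : ∀ x, ¬ φ.SameCycle r x → ¬ φ.SameCycle s x → openDegree φ S x = d
  cycle_count : cycleCount φ = n + 2

variable {d n l : ℕ} {φ : Perm D} {S : Set D} {r s x y : D}

lemma openDegree_congr (h : φ.SameCycle x y) : openDegree φ S x = openDegree φ S y := by
  have : {z | φ.SameCycle x z} = {z | φ.SameCycle y z} :=
    Set.ext fun z => ⟨h.symm.trans, h.trans⟩
  rw [openDegree, this, openDegree]

lemma HasRootedProfile.of_sameCycle (h : HasRootedProfile d φ S r n l) (hrs : φ.SameCycle r s) :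
    HasRootedProfile d φ S s n l :=
  ⟨openDegree_congr hrs ▸ h.root_degree, fun x hx => h.inner_degree x fun hrx =>
    hx (hrs.symm.trans hrx), h.cycle_count⟩

lemma openDegree_restrict {p : D → Prop} (hφ : Preserves φ p) (x : {x // p x}) :
    openDegree hφ.restrict (Subtype.val ⁻¹' S) x = openDegree φ S x.1 := by
  rw [openDegree, openDegree, ← Set.ncard_image_of_injective _ Subtype.val_injective]
  congr 1
  ext y
  constructor
  · rintro ⟨y, ⟨hyS, hxy⟩, rfl⟩
    exact ⟨hyS, sameCycle_subtypePerm.1 hxy⟩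
  · rintro ⟨hyS, k, rfl⟩
    exact ⟨(hφ.restrict ^ k) x, ⟨by simpa [subtypePerm_zpow] using hyS, k, rfl⟩,
      by simp [subtypePerm_zpow]⟩

lemma openDegree_sdiff_pair_of_not_sameCycle (hr : ¬ φ.SameCycle r x) (hs : ¬ φ.SameCycle s x) :
    openDegree φ (S \ {r, s}) x = openDegree φ S x := by
  rw [openDegree, openDegree]
  congr 1
  ext y
  refine ⟨fun h => ⟨h.1.1, h.2⟩, fun h => ⟨⟨h.1, ?_⟩, h.2⟩⟩
  rintro (rfl | rfl)
  · exact hr h.2.symm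
  · exact hs h.2.symm

variable [Finite D]

lemma openDegree_pos (hx : x ∈ S) : 0 < openDegree φ S x :=
  (Set.ncard_pos (Set.toFinite _)).2 ⟨x, hx, .refl _ _⟩

lemma openDegree_sdiff_pair_add_two (hr : r ∈ S) (hs : s ∈ S) (hrs : r ≠ s)
    (h : φ.SameCycle r s) : openDegree φ (S \ {r, s}) r + 2 = openDegree φ S r := by
  rw [openDegree, Set.inter_comm, ← Set.inter_sdiff_assoc, Set.inter_comm]
  exact ncard_sdiff_pair_add_two ⟨hr, .refl _ _⟩ ⟨hs, h⟩ hrs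

/-- The open degrees of the `n + 1` faces add up to the number of open darts. -/
lemma HasRootedProfile.ncard_eq (h : HasRootedProfile d φ S r n l) : S.ncard = d * n + l := by
  classical
  have := Fintype.ofFinite D
  have := Fintype.ofFinite (Quotient (SameCycle.setoid φ))
  have fiber (x : D) : (S.toFinset.filter fun y => Quotient.mk (SameCycle.setoid φ) y = ⟦x⟧).card =
      openDegree φ S x := by
    rw [openDegree, Set.ncard_eq_toFinset_card']
    congr 1
    ext y
    simp [Quotient.eq, SameCycle.setoid, sameCycle_comm]
  have inner (c : Quotient (SameCycle.setoid φ)) (hc : c ∈ Finset.univ.erase ⟦r⟧) :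
      (S.toFinset.filter fun y => Quotient.mk (SameCycle.setoid φ) y = c).card = d := by
    induction c using Quotient.inductionOn with
    | _ x => exact (fiber x).trans (h.inner_degree x fun hrx =>
        Finset.ne_of_mem_erase hc (Quotient.sound hrx.symm))
  have card_quotient : Fintype.card (Quotient (SameCycle.setoid φ)) = n + 1 := by
    rw [← h.cycle_count, cycleCount, classCount, Nat.card_eq_fintype_card]
  rw [Set.ncard_eq_toFinset_card', Finset.card_eq_sum_card_fiberwise (fun y _ =>
    Finset.mem_coe.2 (Finset.mem_univ (Quotient.mk (SameCycle.setoid φ) y))),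
    ← Finset.sum_erase_add _ _ (Finset.mem_univ ⟦r⟧), fiber, h.root_degree,
    Finset.sum_congr rfl inner, Finset.sum_const, Finset.card_erase_of_mem (Finset.mem_univ _),
    Finset.card_univ, card_quotient, Nat.add_sub_cancel, smul_eq_mul, mul_comm]

variable [DecidableEq D]

lemma sameCycle_mul_swap_left_iff (h : ¬ φ.SameCycle r s) :
    (φ * swap r s).SameCycle r y ↔ φ.SameCycle r y ∨ φ.SameCycle s y := by
  classical
  change SameCycle.setoid _ r y ↔ _
  rw [sameCycle_setoid_mul_swap_of_not_sameCycle h, sup_sameCycle_setoid_swap, Setoid.ker_def,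
    ite_self]
  split_ifs with hy
  · exact iff_of_true rfl (.inr hy.symm)
  · exact Quotient.eq.trans (or_iff_left (mt SameCycle.symm hy)).symm

lemma sameCycle_mul_swap_iff_of_not_sameCycle (h : ¬ φ.SameCycle r s) (hr : ¬ φ.SameCycle r x)
    (hs : ¬ φ.SameCycle s x) : (φ * swap r s).SameCycle x y ↔ φ.SameCycle x y := by
  classical
  change SameCycle.setoid _ x y ↔ _
  rw [sameCycle_setoid_mul_swap_of_not_sameCycle h, sup_sameCycle_setoid_swap, Setoid.ker_def,
    if_neg (show ¬ SameCycle.setoid φ x s from mt SameCycle.symm hs)]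
  split_ifs with hy
  · exact iff_of_false (fun e => hr (Quotient.exact e).symm) fun hxy => hs (hxy.trans hy).symm
  · exact Quotient.eq

lemma openDegree_mul_swap_left (h : ¬ φ.SameCycle r s) :
    openDegree (φ * swap r s) S r = openDegree φ S r + openDegree φ S s := by
  rw [openDegree, openDegree, openDegree, ← Set.ncard_union_eq]
  · congr 1
    ext y
    simp only [Set.mem_inter_iff, Set.mem_union, Set.mem_ofPred_eq, sameCycle_mul_swap_left_iff h,
      and_or_left]
  · exact Set.disjoint_left.2 fun y hr hs => h (hr.2.trans hs.2.symm)

lemma openDegree_mul_swap_of_not_sameCycle (h : ¬ φ.SameCycle r s) (hr : ¬ φ.SameCycle r x)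
    (hs : ¬ φ.SameCycle s x) : openDegree (φ * swap r s) S x = openDegree φ S x := by
  simp only [openDegree, sameCycle_mul_swap_iff_of_not_sameCycle h hr hs]

lemma HasRootedProfile.mul_swap_of_not_sameCycle (h : HasRootedProfile d φ S r n (l + 1))
    (hr : r ∈ S) (hs : s ∈ S) (hφ : ¬ φ.SameCycle r s) :
    HasRootedProfile d (φ * swap r s) (S \ {r, s}) r (n - 1) (l + (d - 1)) := by
  have hrs : r ≠ s := fun e => hφ (e ▸ .refl _ _)
  have merged := openDegree_mul_swap_left (S := S) hφ
  have removed := openDegree_sdiff_pair_add_two hr hs hrs (sameCycle_mul_swap_of_not_sameCycle hφ)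
  have root := h.root_degree
  have inner := h.inner_degree s hφ
  have d_pos : 0 < d := inner ▸ openDegree_pos hs
  have count := h.cycle_count
  have count_mul_swap := cycleCount_eq_mul_swap_add_one hφ
  have count_pos : cycleCount (φ * swap r s) ≠ 0 := Nat.card_ne_zero.2 ⟨⟨⟦r⟧⟩, inferInstance⟩
  refine ⟨by omega, fun x hx => ?_, by omega⟩
  obtain ⟨hrx, hsx⟩ := not_or.1 ((sameCycle_mul_swap_left_iff hφ).not.1 hx)
  rw [openDegree_mul_swap_of_not_sameCycle hφ hrx hsx,
    openDegree_sdiff_pair_of_not_sameCycle hrx hsx, h.inner_degree x hrx]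

lemma HasRootedProfile.mul_swap_of_sameCycle (h : HasRootedProfile d φ S r n (l + 1))
    (hr : r ∈ S) (hs : s ∈ S) (hrs : r ≠ s) (hφ : φ.SameCycle r s) {b : ℕ}
    (hb : openDegree (φ * swap r s) (S \ {r, s}) s = b) :
    HasTwoRootedProfile d (φ * swap r s) (S \ {r, s}) r s n (l - 1 - b) b := by
  have hsep := not_sameCycle_mul_swap hφ hrs
  have swap_swap : φ * swap r s * swap r s = φ := by rw [mul_assoc, swap_mul_self, mul_one]
  have split := openDegree_mul_swap_left (S := S \ {r, s}) hsep
  have removed := openDegree_sdiff_pair_add_two hr hs hrs hφ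
  have root := h.root_degree
  have count := h.cycle_count
  have count_mul_swap := cycleCount_mul_swap_eq_add_one hφ hrs
  rw [swap_swap] at split
  refine ⟨hsep, by omega, hb, fun x hrx hsx => ?_, by omega⟩
  have hrx' : ¬ φ.SameCycle r x := by
    rw [← swap_swap, sameCycle_mul_swap_left_iff hsep]
    exact not_or.2 ⟨hrx, hsx⟩
  rw [openDegree_sdiff_pair_of_not_sameCycle hrx hsx, ← h.inner_degree x hrx',
    ← openDegree_mul_swap_of_not_sameCycle hsep hrx hsx, swap_swap]

end Profile

section SplitSum

lemma sum_filter_count {M : Type*} [AddCommMonoid M] (p : ℕ → Prop) [DecidablePred p] (h : ℕ → M)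
    (m : ℕ) : ∑ i ∈ (Finset.range m).filter p, h (Nat.count p i) =
      ∑ b ∈ Finset.range (Nat.count p m), h b := by
  induction m with
  | zero => rfl
  | succ m ih =>
    rw [Finset.range_add_one, Finset.filter_insert, Nat.count_succ]
    split_ifs with hm
    · rw [Finset.sum_insert (by simp), ih, Finset.sum_range_succ, add_comm]
    · exact ih

variable {φ : Perm D} {S : Set D} {r s : D}

lemma iterate_succ_injOn (f : D → D) (r : D) :
    Set.InjOn (fun i => f^[i + 1] r) (Set.Iio (Function.minimalPeriod f r - 1)) := by
  intro i hi j hj hij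
  exact Nat.succ_injective (Function.iterate_injOn_Iio_minimalPeriod
    (Nat.add_lt_of_lt_sub hi) (Nat.add_lt_of_lt_sub hj) hij)

open Classical in
lemma ncard_iterate_succ_mem (f : D → D) (S : Set D) {m : ℕ}
    (hm : m ≤ Function.minimalPeriod f r - 1) :
    (S ∩ {x | ∃ i < m, f^[i + 1] r = x}).ncard = Nat.count (fun i => f^[i + 1] r ∈ S) m := by
  have image_eq : S ∩ {x | ∃ i < m, f^[i + 1] r = x} =
      (fun i => f^[i + 1] r) '' {i | i < m ∧ f^[i + 1] r ∈ S} := by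
    ext x
    constructor
    · rintro ⟨hx, i, hi, rfl⟩
      exact ⟨i, ⟨hi, hx⟩, rfl⟩
    · rintro ⟨i, ⟨hi, hx⟩, rfl⟩
      exact ⟨hx, i, hi, rfl⟩
  rw [image_eq, ((iterate_succ_injOn f r).mono fun i hi => hi.1.trans_le hm).ncard_image,
    Nat.count_eq_card_filter_range, ← Set.ncard_coe_finset, Finset.coe_filter]
  simp only [Finset.mem_range]

variable [Finite D]

lemma sameCycle_and_ne_iff_exists_iterate : φ.SameCycle r s ∧ s ≠ r ↔
    ∃ i < Function.minimalPeriod φ r - 1, φ^[i + 1] r = s := by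
  constructor
  · rintro ⟨h, hs⟩
    obtain ⟨k, hk, rfl⟩ := exists_iterate_eq_of_sameCycle h
    cases k with
    | zero => exact absurd rfl hs
    | succ i => exact ⟨i, Nat.lt_sub_of_add_lt hk, rfl⟩
  · rintro ⟨i, hi, rfl⟩
    refine ⟨?_, (iterate_ne_iterate i.succ_pos (Nat.add_lt_of_lt_sub hi)).symm⟩
    rw [iterate_eq_pow]
    exact sameCycle_pow_right.2 .rfl

variable [DecidableEq D]

open Classical in
lemma openDegree_mul_swap_iterate {i : ℕ} (hi : i < Function.minimalPeriod φ r - 1) :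
    openDegree (φ * swap r (φ^[i + 1] r)) (S \ {r, φ^[i + 1] r}) (φ^[i + 1] r) =
      Nat.count (fun i => φ^[i + 1] r ∈ S) i := by
  have hi' := Nat.add_lt_of_lt_sub hi
  rw [← ncard_iterate_succ_mem φ S hi.le, openDegree]
  congr 1
  ext x
  simp only [Set.mem_inter_iff, Set.mem_sdiff, Set.mem_insert_iff, Set.mem_singleton_iff,
    not_or, Set.mem_ofPred_eq, sameCycle_mul_swap_iterate_iff i.succ_pos hi']
  constructor
  · rintro ⟨⟨hx, -, hne⟩, j, hj, hji, rfl⟩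
    have hji := hji.lt_of_ne fun e => hne (e ▸ rfl)
    exact ⟨hx, j - 1, by omega, by rw [Nat.sub_add_cancel hj]⟩
  · rintro ⟨hx, j, hj, rfl⟩
    have hj' := Nat.succ_lt_succ hj
    exact ⟨⟨hx, (iterate_ne_iterate j.succ_pos (hj'.trans hi')).symm, iterate_ne_iterate hj' hi'⟩,
      j + 1, j.succ_pos, hj'.le, rfl⟩

end SplitSum

open Classical in
/-- As `s` runs over the other open darts of the root face, the number of open darts strictly
between `r` and `s` takes each of the values `0, …, l - 1` exactly once. -/
lemma sum_openDegree_mul_swap {M : Type*} [AddCommMonoid M] [Fintype D] {φ : Perm D} {S : Set D}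
    {r : D} {l : ℕ} (hr : r ∈ S) (hl : openDegree φ S r = l + 1) (h : ℕ → M) :
    ∑ s with s ∈ S ∧ s ≠ r ∧ φ.SameCycle r s, h (openDegree (φ * swap r s) (S \ {r, s}) s) =
      ∑ b ∈ Finset.range l, h b := by
  set m := Function.minimalPeriod φ r - 1
  have count_eq : Nat.count (fun i => φ^[i + 1] r ∈ S) m = l := by
    rw [← ncard_iterate_succ_mem φ S le_rfl]
    simp only [← sameCycle_and_ne_iff_exists_iterate]
    have hr' : r ∈ S ∩ {x | φ.SameCycle r x} := ⟨hr, .refl _ _⟩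
    rw [← Nat.add_sub_cancel (n := l) (m := 1), ← hl, openDegree,
      ← Set.ncard_sdiff_singleton_of_mem hr']
    congr 1
    ext x
    exact and_assoc.symm
  rw [← count_eq, ← sum_filter_count]
  symm
  refine Finset.sum_nbij (fun i => φ^[i + 1] r) (fun i hi => ?_) (fun i hi j hj => ?_)
    (fun s hs => ?_) fun i hi => ?_
  · rw [Finset.mem_filter, Finset.mem_range] at hi
    have := sameCycle_and_ne_iff_exists_iterate.2 ⟨i, hi.1, rfl⟩
    exact Finset.mem_filter.2 ⟨Finset.mem_univ _, hi.2, this.2, this.1⟩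
  · rw [Finset.mem_coe, Finset.mem_filter, Finset.mem_range] at hi hj
    exact fun hij => iterate_succ_injOn φ r hi.1 hj.1 hij
  · obtain ⟨-, hs, hsr, hrs⟩ := Finset.mem_filter.1 hs
    obtain ⟨i, hi, rfl⟩ := sameCycle_and_ne_iff_exists_iterate.1 ⟨hrs, hsr⟩
    exact ⟨i, Finset.mem_coe.2 (Finset.mem_filter.2 ⟨Finset.mem_range.2 hi, hs⟩), rfl⟩
  · rw [Finset.mem_filter, Finset.mem_range] at hi
    rw [openDegree_mul_swap_iterate hi.1]

section Count

variable {d n l : ℕ} {φ : Perm D} {S : Set D} {r s : D} {G : ℕ → ℕ → ℚ}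

lemma card_subtype_eq_sum_card_fiber {X ι : Type*} [Finite X] {P : X → Prop}
    (f : X → ι) {t : Finset ι} (hf : ∀ x, P x → f x ∈ t) :
    Nat.card {x // P x} = ∑ i ∈ t, Nat.card {x // P x ∧ f x = i} := by
  classical
  have := Fintype.ofFinite X
  simp only [Nat.card_eq_fintype_card, Fintype.card_subtype]
  rw [Finset.card_eq_sum_card_fiberwise fun x hx => hf x (Finset.mem_filter.1 hx).2]
  simp only [Finset.filter_filter]

lemma HasTwoRootedProfile.symm {a b : ℕ} (h : HasTwoRootedProfile d φ S r s n a b) :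
    HasTwoRootedProfile d φ S s r n b a :=
  ⟨fun hsr => h.separated hsr.symm, h.right_degree, h.left_degree,
    fun x hs hr => h.inner_degree x hr hs, h.cycle_count⟩

open Classical in
lemma IsTwoSphereGluing.filter_eq_iff [Fintype (Quotient (SameCycle.setoid φ))] {α : Perm D}
    (h : IsTwoSphereGluing φ S r s α) {A : Finset (Quotient (SameCycle.setoid φ))}
    (hA : A ⊆ {⟦r⟧, ⟦s⟧}ᶜ) :
    ({⟦r⟧, ⟦s⟧}ᶜ : Finset (Quotient (SameCycle.setoid φ))).filter
        (fun c => ∃ x, ⟦x⟧ = c ∧ componentSetoid φ α x r) = A ↔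
      ∀ x, componentSetoid φ α x r ↔ ⟦x⟧ ∈ insert ⟦r⟧ A := by
  have congr_of_mk_eq {x y : D} (hxy : Quotient.mk (SameCycle.setoid φ) x = ⟦y⟧) :
      componentSetoid φ α x y := Setoid.le_def.1 le_sup_left (Quotient.exact hxy)
  have exists_iff (x : D) : (∃ y, Quotient.mk (SameCycle.setoid φ) y = ⟦x⟧ ∧
      componentSetoid φ α y r) ↔ componentSetoid φ α x r :=
    ⟨fun ⟨y, hyx, hy⟩ => Setoid.trans' _ (congr_of_mk_eq hyx.symm) hy, fun hx => ⟨x, rfl, hx⟩⟩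
  have root_mem {x : D} (hx : Quotient.mk (SameCycle.setoid φ) x = ⟦r⟧) :
      componentSetoid φ α x r := congr_of_mk_eq hx
  have other_notMem {x : D} (hx : Quotient.mk (SameCycle.setoid φ) x = ⟦s⟧) :
      ¬ componentSetoid φ α x r := fun hxr =>
    h.separated (Setoid.trans' _ (Setoid.symm' _ hxr) (congr_of_mk_eq hx))
  rw [Finset.ext_iff, Quotient.forall]
  refine forall_congr' fun x => ?_
  have hAx := @hA ⟦x⟧
  rw [Finset.mem_filter, exists_iff]
  simp only [Finset.mem_compl, Finset.mem_insert, Finset.mem_singleton] at hAx ⊢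
  have := @root_mem x
  have := @other_notMem x
  tauto

lemma cycleCount_eq_one_iff [Nonempty D] : cycleCount φ = 1 ↔ ∀ x y, φ.SameCycle x y := by
  rw [cycleCount, classCount_eq_one_iff, Setoid.eq_top_iff]
  rfl

variable [Finite D]

/-- `G n l` counts the sphere gluings of a rooted `l`-gon and `n` further `d`-gons, provided fewer
than `N` sides are glued. -/
def CountsSphereGluings (d : ℕ) (G : ℕ → ℕ → ℚ) (N : ℕ) : Prop :=
  ∀ {D : Type u} [Finite D] {φ : Perm D} {S : Set D} {r : D} {n l : ℕ}, S.ncard < N →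
    HasRootedProfile d φ S r n l → (Nat.card {α // IsSphereGluing φ S α} : ℚ) = G n l

lemma HasRootedProfile.card_of_zero (h : HasRootedProfile d φ S r 0 0) :
    Nat.card {α // IsSphereGluing φ S α} = 1 := by
  classical
  have : Nonempty D := ⟨r⟩
  obtain rfl : S = ∅ := (Set.ncard_eq_zero (Set.toFinite S)).1 h.ncard_eq
  have isSphereGluing_iff (α : Perm D) : IsSphereGluing φ ∅ α ↔ α = 1 := by
    refine ⟨fun hα => isMatchingOn_empty_iff.1 hα.toIsMatchingOn, ?_⟩
    rintro rfl
    have hone := classCount_eq_one_iff.1 h.cycle_count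
    rw [← componentSetoid_one] at hone
    refine ⟨⟨isMatchingOn_empty_iff.2 rfl, ?_⟩, hone⟩
    rw [mul_one, h.cycle_count, hone, classCount_eq_one_iff.2 rfl, Set.ncard_empty]
  simp only [isSphereGluing_iff]
  exact Nat.card_unique

lemma HasRootedProfile.not_isSphereGluing (h : HasRootedProfile d φ S r (n + 1) 0) (α : Perm D) :
    ¬ IsSphereGluing φ S α := by
  intro hα
  have : Nonempty D := ⟨r⟩
  have fixed {x : D} (hx : φ.SameCycle r x) : α x = x := by
    by_contra hne
    exact (openDegree_pos ((hα.apply_ne_self_iff x).1 hne)).ne'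
      ((openDegree_congr hx).symm.trans h.root_degree)
  have hφp : Preserves φ (φ.SameCycle r) := fun x => sameCycle_apply_right
  have hαp : Preserves α (φ.SameCycle r) := fun x =>
    ⟨fun hx => (α.injective (fixed hx)) ▸ hx, fun hx => (fixed hx).symm ▸ hx⟩
  have all (x : D) : φ.SameCycle r x :=
    (rel_iff_of_componentSetoid hφp hαp (Setoid.eq_top_iff.1 hα.connected r x)).1 (.refl _ _)
  have := cycleCount_eq_one_iff.2 fun x y => (all x).symm.trans (all y)
  have := h.cycle_count
  omega

lemma HasTwoRootedProfile.restrict {a b m : ℕ} (h : HasTwoRootedProfile d φ S r s n a b)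
    {p : D → Prop} (hφ : Preserves φ p) (hr : p r) (hs : ¬ p s)
    (hm : cycleCount hφ.restrict = m + 1) :
    HasRootedProfile d hφ.restrict (Subtype.val ⁻¹' S) ⟨r, hr⟩ m a := by
  refine ⟨(openDegree_restrict hφ _).trans h.left_degree, fun x hx => ?_, hm⟩
  refine (openDegree_restrict hφ x).trans
    (h.inner_degree x (fun hrx => hx (sameCycle_subtypePerm.2 hrx)) ?_)
  exact fun hsx => hs ((rel_iff_of_sameCycle hφ hsx).2 x.2)

lemma HasTwoRootedProfile.card_rootComponent_eq {a b N : ℕ}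
    (h : HasTwoRootedProfile d φ S r s n a b) (hN : S.ncard < N)
    (hG : CountsSphereGluings.{u} d G N) [DecidableEq (Quotient (SameCycle.setoid φ))]
    {A : Finset (Quotient (SameCycle.setoid φ))} (hr : ⟦r⟧ ∉ A) (hs : ⟦s⟧ ∉ A) :
    (Nat.card {α // IsTwoSphereGluing φ S r s α ∧
        ∀ x, componentSetoid φ α x r ↔ ⟦x⟧ ∈ insert ⟦r⟧ A} : ℚ) =
      G A.card a * G (n - A.card) b := by
  have hφ : Preserves φ fun x => ⟦x⟧ ∈ insert ⟦r⟧ A := fun x =>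
    iff_of_eq (congrArg (· ∈ insert ⟦r⟧ A) (Quotient.sound (sameCycle_apply_left.2 .rfl)))
  have mem_root : (⟦r⟧ : Quotient (SameCycle.setoid φ)) ∈ insert ⟦r⟧ A :=
    Finset.mem_insert_self _ _
  have notMem_other : (⟦s⟧ : Quotient (SameCycle.setoid φ)) ∉ insert ⟦r⟧ A := by
    rw [Finset.mem_insert, not_or]
    exact ⟨fun e => h.separated (Quotient.exact e.symm), hs⟩
  have count : cycleCount hφ.restrict = A.card + 1 := by
    rw [cycleCount, sameCycle_setoid_restrict, classCount_comap_val (· ∈ insert ⟦r⟧ A),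
      Nat.card_eq_fintype_card, Fintype.card_coe, Finset.card_insert_of_notMem hr]
  have count_add := cycleCount_restrict_add hφ
  have count_not_pos : 0 < cycleCount hφ.not.restrict :=
    have : Nonempty (Quotient (SameCycle.setoid hφ.not.restrict)) := ⟨⟦⟨s, notMem_other⟩⟧⟩
    Nat.card_pos
  have card_add := ncard_preimage_val_add (fun x => ⟦x⟧ ∈ insert ⟦r⟧ A) S
  rw [h.cycle_count] at count_add
  rw [card_isTwoSphereGluing_and hφ mem_root notMem_other, Nat.cast_mul,
    hG (by omega) (h.restrict hφ mem_root notMem_other count),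
    hG (by omega) (h.symm.restrict hφ.not notMem_other (not_not.2 mem_root)
      (m := n - A.card) (by omega))]

/-- The root component of a two-sphere gluing consists of the root face of `r` and an arbitrary set
of inner faces. -/
lemma HasTwoRootedProfile.card_isTwoSphereGluing {a b N : ℕ}
    (h : HasTwoRootedProfile d φ S r s n a b) (hN : S.ncard < N)
    (hG : CountsSphereGluings.{u} d G N) :
    (Nat.card {α // IsTwoSphereGluing φ S r s α} : ℚ) =
      ∑ ij ∈ Finset.HasAntidiagonal.antidiagonal n,
        (n.choose ij.1 : ℚ) * (G ij.1 a * G ij.2 b) := by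
  classical
  have := Fintype.ofFinite (Quotient (SameCycle.setoid φ))
  set U : Finset (Quotient (SameCycle.setoid φ)) := {⟦r⟧, ⟦s⟧}ᶜ
  have card_U : U.card = n := by
    have hrs : (⟦r⟧ : Quotient (SameCycle.setoid φ)) ≠ ⟦s⟧ := fun e =>
      h.separated (Quotient.exact e)
    rw [Finset.card_compl, Finset.card_pair hrs, ← Nat.card_eq_fintype_card]
    exact Nat.sub_eq_of_eq_add h.cycle_count
  have fiber (A : Finset (Quotient (SameCycle.setoid φ))) (hA : A ∈ U.powerset) :
      (Nat.card {α // IsTwoSphereGluing φ S r s α ∧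
        U.filter (fun c => ∃ x, ⟦x⟧ = c ∧ componentSetoid φ α x r) = A} : ℚ) =
      G A.card a * G (n - A.card) b := by
    rw [Finset.mem_powerset] at hA
    rw [← h.card_rootComponent_eq hN hG (fun hr => by simpa [U] using hA hr)
      (fun hs => by simpa [U] using hA hs)]
    exact congrArg Nat.cast (Nat.card_congr (Equiv.subtypeEquivRight fun α =>
      and_congr_right fun hα => hα.filter_eq_iff hA))
  rw [card_subtype_eq_sum_card_fiber
      (fun α => U.filter fun c => ∃ x, ⟦x⟧ = c ∧ componentSetoid φ α x r)
      (fun _ _ => Finset.mem_powerset.2 (Finset.filter_subset _ U)),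
    Nat.cast_sum, Finset.sum_congr rfl fiber,
    Finset.sum_powerset_apply_card (fun m => G m a * G (n - m) b), card_U,
    Finset.Nat.sum_antidiagonal_eq_sum_range_succ_mk]
  simp only [nsmul_eq_mul]

section DecidableEq

variable [DecidableEq D]

lemma card_isSphereGluing_and_apply_eq_of_not_sameCycle (hr : r ∈ S) (hs : s ∈ S)
    (hφ : ¬ φ.SameCycle r s) : Nat.card {α // IsSphereGluing φ S α ∧ α r = s} =
      Nat.card {α // IsSphereGluing (φ * swap r s) (S \ {r, s}) α} :=
  Nat.card_congr ((Equiv.mulLeft (swap r s)).subtypeEquiv fun _ =>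
    isSphereGluing_and_apply_eq_iff_of_not_sameCycle hr hs hφ)

lemma card_isSphereGluing_and_apply_eq_of_sameCycle (hr : r ∈ S) (hs : s ∈ S) (hrs : r ≠ s)
    (hφ : φ.SameCycle r s) : Nat.card {α // IsSphereGluing φ S α ∧ α r = s} =
      Nat.card {α // IsTwoSphereGluing (φ * swap r s) (S \ {r, s}) r s α} :=
  Nat.card_congr ((Equiv.mulLeft (swap r s)).subtypeEquiv fun _ =>
    isSphereGluing_and_apply_eq_iff_of_sameCycle hr hs hrs hφ)

end DecidableEq

end Count

section Recursion

variable {d n l : ℕ} {φ : Perm D} {S : Set D} {r : D} {G : ℕ → ℕ → ℚ}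

open Classical in
lemma CountsSphereGluings.sum_card_of_sameCycle [Fintype D]
    (hG : CountsSphereGluings.{u} d G S.ncard) (h : HasRootedProfile d φ S r n (l + 1))
    (hr : r ∈ S) :
    ∑ s with s ∈ S ∧ s ≠ r ∧ φ.SameCycle r s,
      (Nat.card {α // IsSphereGluing φ S α ∧ α r = s} : ℚ) =
    ∑ b ∈ Finset.range l, ∑ ij ∈ Finset.HasAntidiagonal.antidiagonal n,
      (n.choose ij.1 : ℚ) * (G ij.1 (l - 1 - b) * G ij.2 b) := by
  rw [← sum_openDegree_mul_swap hr h.root_degree]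
  refine Finset.sum_congr rfl fun s hs => ?_
  obtain ⟨-, hs, hsr, hφ⟩ := Finset.mem_filter.1 hs
  rw [card_isSphereGluing_and_apply_eq_of_sameCycle hr hs hsr.symm hφ]
  have hcard := ncard_sdiff_pair_add_two hr hs hsr.symm
  exact (h.mul_swap_of_sameCycle hr hs hsr.symm hφ rfl).card_isTwoSphereGluing (by omega) hG

open Classical in
lemma CountsSphereGluings.sum_card_of_not_sameCycle [Fintype D]
    (hG : CountsSphereGluings.{u} d G S.ncard) (h : HasRootedProfile d φ S r n (l + 1))
    (hr : r ∈ S) :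
    ∑ s with s ∈ S ∧ ¬ φ.SameCycle r s,
      (Nat.card {α // IsSphereGluing φ S α ∧ α r = s} : ℚ) = d * n * G (n - 1) (l + (d - 1)) := by
  have card_fiber (s : D) (hs : s ∈ Finset.univ.filter fun s => s ∈ S ∧ ¬ φ.SameCycle r s) :
      (Nat.card {α // IsSphereGluing φ S α ∧ α r = s} : ℚ) = G (n - 1) (l + (d - 1)) := by
    obtain ⟨-, hs, hφ⟩ := Finset.mem_filter.1 hs
    have hcard := ncard_sdiff_pair_add_two hr hs fun e => hφ (e ▸ .refl _ _)
    rw [card_isSphereGluing_and_apply_eq_of_not_sameCycle hr hs hφ]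
    exact hG (by omega) (h.mul_swap_of_not_sameCycle hr hs hφ)
  have card_inner : (Finset.univ.filter fun s => s ∈ S ∧ ¬ φ.SameCycle r s).card = d * n := by
    have total := Set.ncard_inter_add_ncard_sdiff_eq_ncard S {s | φ.SameCycle r s}
    have root := h.root_degree
    rw [openDegree] at root
    rw [h.ncard_eq, root, add_comm, add_left_inj] at total
    rw [← total, ← Set.ncard_coe_finset, Finset.coe_filter_univ]
    rfl
  rw [Finset.sum_congr rfl card_fiber, Finset.sum_const, card_inner, nsmul_eq_mul, Nat.cast_mul]

variable [Finite D]

lemma CountsSphereGluings.card_isSphereGluing_succ (hG : CountsSphereGluings.{u} d G S.ncard)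
    (h : HasRootedProfile d φ S r n (l + 1)) (hr : r ∈ S) :
    (Nat.card {α // IsSphereGluing φ S α} : ℚ) =
      (∑ b ∈ Finset.range l, ∑ ij ∈ Finset.HasAntidiagonal.antidiagonal n,
        (n.choose ij.1 : ℚ) * (G ij.1 (l - 1 - b) * G ij.2 b)) +
      d * n * G (n - 1) (l + (d - 1)) := by
  classical
  have := Fintype.ofFinite D
  have partner_mem (α : Perm D) (hα : IsSphereGluing φ S α) :
      α r ∈ Finset.univ.filter fun s => s ∈ S ∧ s ≠ r :=
    Finset.mem_filter.2 ⟨Finset.mem_univ _, hα.apply_mem hr, (hα.apply_ne_self_iff r).2 hr⟩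
  rw [← hG.sum_card_of_sameCycle h hr, ← hG.sum_card_of_not_sameCycle h hr,
    card_subtype_eq_sum_card_fiber (· r) partner_mem, Nat.cast_sum,
    ← Finset.sum_filter_add_sum_filter_not _ (φ.SameCycle r), Finset.filter_filter,
    Finset.filter_filter]
  simp only [and_assoc]
  congr 2
  refine Finset.filter_congr fun s _ => and_congr_right fun _ => and_iff_right_of_imp ?_
  rintro hφ rfl
  exact hφ (.refl _ _)

theorem card_isSphereGluing (hG : SatisfiesTutteRecursion d G) (h : HasRootedProfile d φ S r n l) :
    (Nat.card {α // IsSphereGluing φ S α} : ℚ) = G n l := by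
  classical
  suffices ∀ N, CountsSphereGluings.{u} d G N from this (S.ncard + 1) (Nat.lt_succ_self _) h
  intro N
  induction N with
  | zero => exact fun hN => absurd hN (Nat.not_lt_zero _)
  | succ N ih =>
    intro D _ φ S r n l hN h
    have ih : CountsSphereGluings.{u} d G S.ncard := fun hlt =>
      ih (hlt.trans_le (Nat.le_of_lt_succ hN))
    cases l with
    | succ l =>
      obtain ⟨r', hr', hrr'⟩ : (S ∩ {y | φ.SameCycle r y}).Nonempty :=
        Set.nonempty_of_ncard_ne_zero (h.root_degree.trans_ne l.succ_ne_zero)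
      rw [hG.succ, ih.card_isSphereGluing_succ (h.of_sameCycle hrr') hr']
    | zero =>
      rw [hG.zero]
      cases n with
      | zero => rw [h.card_of_zero, Nat.cast_one, if_pos rfl]
      | succ n =>
        have : IsEmpty {α // IsSphereGluing φ S α} := ⟨fun α => h.not_isSphereGluing α.1 α.2⟩
        rw [Nat.card_of_isEmpty, Nat.cast_zero, if_neg n.succ_ne_zero]

end Recursion

section CycleType

variable [Fintype D] {φ : Perm D} {r x : D} {d n l : ℕ}

lemma openDegree_univ (x : D) : openDegree φ Set.univ x = faceDeg φ x :=
  congrArg Set.ncard (Set.univ_inter _)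

lemma hasRootedProfile_univ_iff (hd : 0 < d) (hD : Fintype.card D = d * n + l) :
    HasRootedProfile d φ Set.univ r n l ↔
      faceDeg φ r = l ∧ ∀ x, ¬ φ.SameCycle r x → faceDeg φ x = d := by
  refine ⟨fun h => ⟨(openDegree_univ r).symm.trans h.root_degree,
    fun x hx => (openDegree_univ x).symm.trans (h.inner_degree x hx)⟩, fun ⟨hr, hx⟩ => ?_⟩
  have : Nonempty (Quotient (SameCycle.setoid φ)) := ⟨⟦r⟧⟩
  obtain ⟨m, hm⟩ : ∃ m, cycleCount φ = m + 1 := Nat.exists_eq_add_one.2 Nat.card_pos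
  have h : HasRootedProfile d φ Set.univ r m l :=
    ⟨(openDegree_univ r).trans hr, fun x hrx => (openDegree_univ x).trans (hx x hrx), hm⟩
  have card_eq := h.ncard_eq
  rw [Set.ncard_univ, Nat.card_eq_fintype_card, hD, add_left_inj] at card_eq
  exact Nat.eq_of_mul_eq_mul_left hd card_eq ▸ h

lemma faceDeg_eq_one (hx : φ x = x) : faceDeg φ x = 1 := by
  rw [faceDeg, Set.ncard_eq_one]
  exact ⟨x, Set.ext fun y => ⟨fun h => (h.eq_of_left hx).symm, fun h => h ▸ .refl _ _⟩⟩

variable [DecidableEq D]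

lemma mem_support_of_two_le_faceDeg (h : 2 ≤ faceDeg φ x) : x ∈ φ.support :=
  mem_support.2 fun hx => by rw [faceDeg_eq_one hx] at h; omega

lemma card_support_cycleOf (hx : x ∈ φ.support) : (φ.cycleOf x).support.card = faceDeg φ x := by
  rw [faceDeg, ← Set.ncard_coe_finset]
  congr 1
  ext y
  rw [Finset.mem_coe, mem_support_cycleOf_iff]
  exact and_iff_left hx

lemma cycleOf_eq_iff_mem_support {c : Perm D} (hc : c ∈ φ.cycleFactorsFinset) :
    φ.cycleOf x = c ↔ x ∈ c.support := by
  refine ⟨?_, fun hx => (cycle_is_cycleOf hx hc).symm⟩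
  rintro rfl
  exact mem_support_cycleOf_iff.2 ⟨.refl _ _, cycleOf_mem_cycleFactorsFinset_iff.1 hc⟩

lemma card_faceDeg_eq (hl : 2 ≤ l) : Nat.card {x // faceDeg φ x = l} = l * φ.cycleType.count l := by
  set F := φ.cycleFactorsFinset.filter fun c => l = c.support.card
  have cycleOf_mem {x : D} (hx : faceDeg φ x = l) : φ.cycleOf x ∈ F := by
    have hxs := mem_support_of_two_le_faceDeg (hl.trans_eq hx.symm)
    exact Finset.mem_filter.2
      ⟨cycleOf_mem_cycleFactorsFinset_iff.2 hxs, ((card_support_cycleOf hxs).trans hx).symm⟩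
  have card_fiber (c : Perm D) (hc : c ∈ F) :
      Nat.card {x // faceDeg φ x = l ∧ φ.cycleOf x = c} = l := by
    obtain ⟨hc, hcl⟩ := Finset.mem_filter.1 hc
    have fiber_iff (x : D) : (faceDeg φ x = l ∧ φ.cycleOf x = c) ↔ x ∈ c.support := by
      rw [cycleOf_eq_iff_mem_support hc, and_iff_right_of_imp]
      intro hx
      rw [← card_support_cycleOf (mem_cycleFactorsFinset_support_le hc hx),
        (cycleOf_eq_iff_mem_support hc).2 hx, ← hcl]
    rw [Nat.card_congr (Equiv.subtypeEquivRight fiber_iff), Nat.card_eq_fintype_card,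
      Fintype.card_coe, ← hcl]
  rw [card_subtype_eq_sum_card_fiber φ.cycleOf fun _ => cycleOf_mem,
    Finset.sum_congr rfl card_fiber, Finset.sum_const, smul_eq_mul, mul_comm, cycleType_def,
    Multiset.count_map]
  rfl

lemma cycleType_eq_cons_erase (hr : r ∈ φ.support) :
    φ.cycleType = faceDeg φ r ::ₘ
      (φ.cycleFactorsFinset.erase (φ.cycleOf r)).val.map (Finset.card ∘ support) := by
  rw [← card_support_cycleOf hr, cycleType_def, ← Function.comp_apply (f := Finset.card),
    ← Multiset.map_cons, Finset.erase_val, Multiset.cons_erase]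
  exact cycleOf_mem_cycleFactorsFinset_iff.2 hr

lemma cycleType_erase_eq_replicate_iff (hφ : φ.support = Finset.univ) :
    (∀ x, ¬ φ.SameCycle r x → faceDeg φ x = d) ↔
      ∀ a ∈ (φ.cycleFactorsFinset.erase (φ.cycleOf r)).val.map (Finset.card ∘ support), a = d := by
  have mem_support (x : D) : x ∈ φ.support := hφ ▸ Finset.mem_univ x
  simp only [Multiset.mem_map, Finset.mem_val, Finset.mem_erase, Function.comp_apply]
  constructor
  · rintro h _ ⟨c, ⟨hcr, hc⟩, rfl⟩
    obtain ⟨x, hx⟩ := (mem_cycleFactorsFinset_iff.1 hc).1.nonempty_support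
    obtain rfl := cycle_is_cycleOf hx hc
    rw [card_support_cycleOf (mem_support x)]
    exact h x fun hrx => hcr hrx.cycleOf_eq.symm
  · intro h x hrx
    refine h _ ⟨φ.cycleOf x, ⟨fun e => hrx ?_, ?_⟩, card_support_cycleOf (mem_support x)⟩
    · exact (sameCycle_iff_cycleOf_eq_of_mem_support (mem_support r) (mem_support x)).2 e.symm
    · exact cycleOf_mem_cycleFactorsFinset_iff.2 (mem_support x)

lemma hasRootedProfile_univ_iff_cycleType (hd : 2 ≤ d) (hl : 2 ≤ l)
    (hD : Fintype.card D = d * n + l) :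
    HasRootedProfile d φ Set.univ r n l ↔
      φ.cycleType = l ::ₘ Multiset.replicate n d ∧ faceDeg φ r = l := by
  rw [hasRootedProfile_univ_iff (two_pos.trans_le hd) hD, and_comm]
  refine and_congr_left fun hr => ?_
  have cycleType_eq := cycleType_eq_cons_erase (mem_support_of_two_le_faceDeg (hl.trans_eq hr.symm))
  have sum_eq := sum_cycleType φ
  rw [hr] at cycleType_eq
  constructor
  · intro h
    have support_eq : φ.support = Finset.univ := Finset.eq_univ_of_forall fun x => by
      refine mem_support_of_two_le_faceDeg ?_
      by_cases hx : φ.SameCycle r x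
      · rw [← openDegree_univ, ← openDegree_congr hx, openDegree_univ, hr]
        exact hl
      · exact hd.trans_eq (h x hx).symm
    have rest_eq := Multiset.eq_replicate_card.2 ((cycleType_erase_eq_replicate_iff support_eq).1 h)
    rw [rest_eq] at cycleType_eq
    rw [cycleType_eq, support_eq, Multiset.sum_cons, Multiset.sum_replicate, smul_eq_mul,
      Finset.card_univ, hD, add_comm, add_left_inj, mul_comm] at sum_eq
    rw [cycleType_eq, Nat.eq_of_mul_eq_mul_left (two_pos.trans_le hd) sum_eq]
  · intro h
    rw [h, Multiset.sum_cons, Multiset.sum_replicate, smul_eq_mul, mul_comm, add_comm, ← hD]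
      at sum_eq
    rw [h, Multiset.cons_inj_right] at cycleType_eq
    rw [cycleType_erase_eq_replicate_iff (Finset.card_eq_iff_eq_univ _ |>.1 sum_eq.symm),
      ← cycleType_eq]
    exact fun a => Multiset.eq_of_mem_replicate

end CycleType

section CardOfProfile

open scoped Nat

lemma prod_factorial_count_cons {ι : Type*} [DecidableEq ι] (a : ι) (s : Multiset ι) :
    ∏ b ∈ (a ::ₘ s).toFinset, ((a ::ₘ s).count b)! =
      (a ::ₘ s).count a * ∏ b ∈ s.toFinset, (s.count b)! := by
  have ha : a ∈ (a ::ₘ s).toFinset := Multiset.mem_toFinset.2 (Multiset.mem_cons_self a s)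
  have prod_toFinset : ∏ b ∈ s.toFinset, (s.count b)! = ∏ b ∈ (a ::ₘ s).toFinset, (s.count b)! :=
    Finset.prod_subset (Multiset.toFinset_subset.2 (Multiset.subset_cons s a)) fun b _ hb => by
      rw [Multiset.count_eq_zero_of_notMem (mt Multiset.mem_toFinset.2 hb), Nat.factorial_zero]
  rw [prod_toFinset, ← Finset.mul_prod_erase _ _ ha, ← Finset.mul_prod_erase _ _ ha, ← mul_assoc,
    Multiset.count_cons_self, Nat.factorial_succ]
  refine congrArg _ (Finset.prod_congr rfl fun b hb => ?_)
  rw [Multiset.count_cons_of_ne (Finset.ne_of_mem_erase hb)]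

lemma prod_factorial_count_replicate {ι : Type*} [DecidableEq ι] (a : ι) (n : ℕ) :
    ∏ b ∈ (Multiset.replicate n a).toFinset, ((Multiset.replicate n a).count b)! = n ! := by
  induction n with
  | zero => rfl
  | succ n ih =>
    rw [Multiset.replicate_succ, prod_factorial_count_cons, ih, Multiset.count_cons_self,
      Multiset.count_replicate_self, Nat.factorial_succ]

theorem card_hasRootedProfile [Fintype D] {d n l : ℕ} (hd : 2 ≤ d) (hl : 2 ≤ l)
    (hD : Fintype.card D = d * n + l) :
    Nat.card {x : Perm D × D // HasRootedProfile d x.1 Set.univ x.2 n l} * (d ^ n * n !) =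
      (Fintype.card D)! := by
  classical
  set t := l ::ₘ Multiset.replicate n d with ht
  have card_roots (f : Perm D) : Nat.card {r // HasRootedProfile d f Set.univ r n l} =
      if f.cycleType = t then l * t.count l else 0 := by
    simp only [hasRootedProfile_univ_iff_cycleType hd hl hD]
    split_ifs with hf
    · simp only [← ht, hf, true_and]
      rw [card_faceDeg_eq hl, hf]
    · simp only [← ht, hf, false_and]
      exact Nat.card_of_isEmpty
  have sum_eq : t.sum = Fintype.card D := by
    rw [ht, Multiset.sum_cons, Multiset.sum_replicate, smul_eq_mul, hD, add_comm, mul_comm]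
  have two_le (a : ℕ) (ha : a ∈ t) : 2 ≤ a := by
    rcases Multiset.mem_cons.1 ha with rfl | ha
    · exact hl
    · exact hd.trans_eq (Multiset.eq_of_mem_replicate ha).symm
  have card_perm := card_of_cycleType_mul_eq (α := D) t
  rw [if_pos ⟨sum_eq.le, two_le⟩, sum_eq, Nat.sub_self, Nat.factorial_zero, one_mul, ht,
    prod_factorial_count_cons, prod_factorial_count_replicate, Multiset.prod_cons,
    Multiset.prod_replicate, ← ht] at card_perm
  rw [Nat.card_congr (Equiv.subtypeProdEquivSigmaSubtype fun f r =>
      HasRootedProfile d f Set.univ r n l), Nat.card_sigma, Finset.sum_congr rfl fun f _ =>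
      card_roots f, ← Finset.sum_filter, Finset.sum_const, smul_eq_mul, ← card_perm]
  ring

end CardOfProfile

section ClosurePair

lemma exists_mem_closure_pair_iff [Finite D] {σ α : Perm D} {x y : D} :
    (∃ g ∈ Subgroup.closure ({σ, α} : Set (Perm D)), g x = y) ↔ componentSetoid σ α x y := by
  constructor
  · rintro ⟨g, hg, rfl⟩
    induction hg using Subgroup.closure_induction generalizing x with
    | mem g hg =>
      rcases hg with rfl | rfl
      · exact Setoid.le_def.1 le_sup_left (sameCycle_apply_right.2 .rfl)
      · exact Setoid.le_def.1 le_sup_right (sameCycle_apply_right.2 .rfl)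
    | one => exact Setoid.refl' _ x
    | mul g h _ _ hg hh => exact Setoid.trans' _ hh hg
    | inv g _ hg => simpa using Setoid.symm' _ (hg (x := g⁻¹ x))
  · set H := Subgroup.closure ({σ, α} : Set (Perm D))
    have apply_rel {g : Perm D} (hg : g ∈ H) (x : D) : MulAction.orbitRel H D x (g x) :=
      Setoid.symm' _ ⟨⟨g, hg⟩, rfl⟩
    have le_orbitRel : componentSetoid σ α ≤ MulAction.orbitRel H D :=
      sup_le (sameCycle_setoid_le_iff.2 (apply_rel (Subgroup.subset_closure (.inl rfl))))
        (sameCycle_setoid_le_iff.2 (apply_rel (Subgroup.subset_closure (.inr rfl))))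
    intro hxy
    obtain ⟨g, hg⟩ := Setoid.symm' _ (le_orbitRel hxy)
    exact ⟨g, g.2, hg⟩

end ClosurePair

end PlanarGluing

namespace RootedQuadWB

open Equiv Equiv.Perm PlanarGluing

attribute [ext] RootedQuadWB

variable {n p : ℕ}

lemma σ_mul_α_mul_α (m : RootedQuadWB n p) : m.σ * m.α * m.α = m.σ :=
  Equiv.ext fun d => congrArg m.σ (m.α_invol d)

lemma hasRootedProfile (m : RootedQuadWB n p) :
    HasRootedProfile 4 (m.σ * m.α) Set.univ m.root n (2 * p) :=
  (hasRootedProfile_univ_iff four_pos (Fintype.card_fin _)).2 ⟨m.root_face, m.internal_faces⟩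

lemma isSphereGluing (m : RootedQuadWB n p) : IsSphereGluing (m.σ * m.α) Set.univ m.α := by
  have : Nonempty (Fin (4 * n + 2 * p)) := ⟨m.root⟩
  have connected : componentSetoid (m.σ * m.α) m.α = ⊤ := by
    rw [componentSetoid, sameCycle_setoid_mul_sup, Setoid.eq_top_iff]
    exact fun d e => exists_mem_closure_pair_iff.1 (m.connected d e)
  have euler : cycleCount m.σ + cycleCount (m.σ * m.α) = 2 * n + p + 2 := m.euler
  refine ⟨⟨⟨m.α_invol, fun d => iff_of_true (m.α_fixfree d) (Set.mem_univ d)⟩, ?_⟩, connected⟩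
  rw [m.σ_mul_α_mul_α, euler, classCount_eq_one_iff.2 connected, Set.ncard_univ, Nat.card_fin]
  ring

/-- The map with face permutation `φ`, edge involution `α` and root `r`. As faces are the cycles of
`σ * α`, its vertex permutation `σ` is `φ * α`. -/
def ofGluing {φ α : Perm (Fin (4 * n + 2 * p))} {r : Fin (4 * n + 2 * p)}
    (h : HasRootedProfile 4 φ Set.univ r n (2 * p)) (hα : IsSphereGluing φ Set.univ α) :
    RootedQuadWB n p :=
  have mul_mul_self : φ * α * α = φ := Equiv.ext fun d => congrArg φ (hα.involutive d)
  have profile := (hasRootedProfile_univ_iff four_pos (Fintype.card_fin _)).1 h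
  { σ := φ * α
    α := α
    root := r
    α_invol := hα.involutive
    α_fixfree := fun d => (hα.apply_ne_self_iff d).2 (Set.mem_univ d)
    connected := fun d e => by
      rw [exists_mem_closure_pair_iff, componentSetoid, sameCycle_setoid_mul_sup]
      exact Setoid.eq_top_iff.1 hα.connected d e
    euler := by
      have : Nonempty (Fin (4 * n + 2 * p)) := ⟨r⟩
      have euler := hα.euler
      rw [classCount_eq_one_iff.2 hα.connected, Set.ncard_univ, Nat.card_fin] at euler
      rw [mul_mul_self]
      change cycleCount (φ * α) + cycleCount φ = _
      omega
    face_count := mul_mul_self.symm ▸ h.cycle_count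
    root_face := mul_mul_self.symm ▸ profile.1
    internal_faces := mul_mul_self.symm ▸ profile.2 }

/-- A rooted quadrangulation with boundary amounts to a rooted face permutation together with a
gluing of all its darts to a sphere. -/
def equivGluing (n p : ℕ) : RootedQuadWB n p ≃
    Σ x : {x : Perm (Fin (4 * n + 2 * p)) × Fin (4 * n + 2 * p) //
        HasRootedProfile 4 x.1 Set.univ x.2 n (2 * p)},
      {α // IsSphereGluing x.1.1 Set.univ α} where
  toFun m := ⟨⟨(m.σ * m.α, m.root), m.hasRootedProfile⟩, ⟨m.α, m.isSphereGluing⟩⟩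
  invFun x := ofGluing x.1.2 x.2.2
  left_inv m := RootedQuadWB.ext m.σ_mul_α_mul_α rfl rfl
  right_inv x := by
    obtain ⟨⟨⟨φ, r⟩, h⟩, ⟨α, hα⟩⟩ := x
    have mul_mul_self : φ * α * α = φ := Equiv.ext fun d => congrArg φ (hα.involutive d)
    exact Sigma.subtype_ext (Subtype.ext (Prod.ext mul_mul_self rfl)) rfl

theorem card_mul_pow_mul_factorial (hp : 1 ≤ p) :
    (Nat.card (RootedQuadWB n p) : ℚ) * (4 ^ n * n.factorial) =
      (4 * n + 2 * p).factorial * squareGluingCount n (2 * p) := by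
  classical
  have card_pairs := card_hasRootedProfile (D := Fin (4 * n + 2 * p)) (d := 4) (n := n) (l := 2 * p)
    (by norm_num) (by omega) (Fintype.card_fin _)
  rw [Fintype.card_fin] at card_pairs
  rw [Nat.card_congr (equivGluing n p), Nat.card_sigma, Nat.cast_sum,
    Finset.sum_congr rfl fun x _ =>
      card_isSphereGluing satisfiesTutteRecursion_squareGluingCount x.2,
    Finset.sum_const, Finset.card_univ, ← Nat.card_eq_fintype_card, nsmul_eq_mul, ← card_pairs]
  push_cast
  ring

section Relabelling

lemma sameCycle_conj_iff {D : Type*} {f π : Perm D} {x y : D} :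
    (π * f * π⁻¹).SameCycle (π x) (π y) ↔ f.SameCycle x y := by
  simp [sameCycle_conj]

lemma orbitCount_conj {D : Type*} [Fintype D] (f π : Perm D) :
    orbitCount (π * f * π⁻¹) = orbitCount f :=
  Nat.card_congr (Quot.congr π fun _ _ => sameCycle_conj_iff.symm).symm

lemma faceDeg_conj {D : Type*} [Fintype D] (f π : Perm D) (x : D) :
    faceDeg (π * f * π⁻¹) (π x) = faceDeg f x := by
  rw [faceDeg, faceDeg, ← Nat.card_coe_set_eq, ← Nat.card_coe_set_eq]
  exact (Nat.card_congr (π.subtypeEquiv fun _ => sameCycle_conj_iff.symm)).symm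

/-- Permutations of the darts act on rooted maps by relabelling: `σ` and `α` are conjugated and the
root is moved. -/
instance : MulAction (Perm (Fin (4 * n + 2 * p))) (RootedQuadWB n p) where
  smul π m :=
    have conj_mul_conj : π * m.σ * π⁻¹ * (π * m.α * π⁻¹) = π * (m.σ * m.α) * π⁻¹ := by group
    { σ := π * m.σ * π⁻¹
      α := π * m.α * π⁻¹
      root := π m.root
      α_invol := fun d => by simp [m.α_invol]
      α_fixfree := fun d hd => m.α_fixfree (π⁻¹ d) (π.injective (by simpa using hd))
      connected := fun d e => by
        obtain ⟨d, rfl⟩ := π.surjective d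
        obtain ⟨e, rfl⟩ := π.surjective e
        obtain ⟨g, hg, rfl⟩ := m.connected d e
        refine ⟨π * g * π⁻¹, ?_, by simp⟩
        have := Subgroup.mem_map_of_mem (MulAut.conj π).toMonoidHom hg
        rwa [MonoidHom.map_closure, Set.image_pair] at this
      euler := by rw [conj_mul_conj, orbitCount_conj, orbitCount_conj, m.euler]
      face_count := by rw [conj_mul_conj, orbitCount_conj, m.face_count]
      root_face := by rw [conj_mul_conj, faceDeg_conj, m.root_face]
      internal_faces := fun d hd => by
        obtain ⟨d, rfl⟩ := π.surjective d
        rw [conj_mul_conj, sameCycle_conj_iff] at hd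
        rw [conj_mul_conj, faceDeg_conj, m.internal_faces d hd] }
  one_smul m := by cases m; rfl
  mul_smul π ρ m := by cases m; rfl

lemma quadIso_iff_exists_smul_eq {m m' : RootedQuadWB n p} :
    QuadIso m m' ↔ ∃ π : Perm (Fin (4 * n + 2 * p)), π • m = m' := by
  refine exists_congr fun π => ?_
  rw [← mul_inv_eq_iff_eq_mul, ← mul_inv_eq_iff_eq_mul]
  exact (RootedQuadWB.ext_iff (x := π • m)).symm

lemma stabilizer_eq_bot (m : RootedQuadWB n p) :
    MulAction.stabilizer (Perm (Fin (4 * n + 2 * p))) m = ⊥ := by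
  refine (Subgroup.eq_bot_iff_forall _).2 fun π hπ => Equiv.ext fun d => ?_
  rw [MulAction.mem_stabilizer_iff] at hπ
  have comm_σ : m.σ * π = π * m.σ := (mul_inv_eq_iff_eq_mul.1 (congrArg σ hπ)).symm
  have comm_α : m.α * π = π * m.α := (mul_inv_eq_iff_eq_mul.1 (congrArg α hπ)).symm
  have le_centralizer : Subgroup.closure {m.σ, m.α} ≤ Subgroup.centralizer {π} := by
    rw [Subgroup.closure_le, Set.pair_subset_iff]
    exact ⟨Subgroup.mem_centralizer_singleton_iff.2 comm_σ,
      Subgroup.mem_centralizer_singleton_iff.2 comm_α⟩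
  obtain ⟨g, hg, rfl⟩ := m.connected m.root d
  have comm_g := Subgroup.mem_centralizer_singleton_iff.1 (le_centralizer hg)
  rw [← Perm.mul_apply, ← comm_g, Perm.mul_apply]
  exact congrArg g (congrArg root hπ)

theorem card_quot_quadIso_mul : Nat.card (Quot (@QuadIso n p)) * (4 * n + 2 * p).factorial =
    Nat.card (RootedQuadWB n p) := by
  have card_quot : Nat.card (Quot (@QuadIso n p)) =
      Nat.card (MulAction.orbitRel.Quotient (Perm (Fin (4 * n + 2 * p))) (RootedQuadWB n p)) :=
    Nat.card_congr (Quot.congrRight fun m m' =>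
      quadIso_iff_exists_smul_eq.trans (Setoid.comm' (MulAction.orbitRel _ _)))
  rw [card_quot, Nat.card_congr (MulAction.selfEquivOrbitsQuotientProd stabilizer_eq_bot),
    Nat.card_prod, Nat.card_perm, Nat.card_fin]

theorem card_quot_quadIso (hp : 1 ≤ p) :
    (Nat.card (Quot (@QuadIso n p)) : ℚ) = boundaryCoeff n p := by
  have card_eq := card_mul_pow_mul_factorial (n := n) hp
  rw [← card_quot_quadIso_mul, squareGluingCount_two_mul, Nat.cast_mul] at card_eq
  have card_darts_ne : ((4 * n + 2 * p).factorial : ℚ) ≠ 0 := by positivity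
  have card_inner_ne : (4 ^ n * n.factorial : ℚ) ≠ 0 := by positivity
  refine mul_right_cancel₀ (mul_ne_zero card_darts_ne card_inner_ne) ?_
  linear_combination card_eq

end Relabelling

end RootedQuadWB

/-- The number of rooted quadrangulations with a general boundary of perimeter
`2p` and `n` internal faces equals
`q_{n,p} = ((2p)!/(p!(p-1)!)) · 3^n · (2n+p-1)!/(n!(n+p+1)!)`
(stated multiplied out to avoid division). -/
theorem card_quadrangulations_with_boundary (n p : ℕ) (hp : 1 ≤ p) :
    Nat.card (Quot (@QuadIso n p))
        * (p.factorial * (p - 1).factorial * n.factorial * (n + p + 1).factorial)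
      = (2 * p).factorial * 3 ^ n * (2 * n + p - 1).factorial := by
  obtain ⟨q, rfl⟩ := Nat.exists_eq_add_of_le' hp
  have closed_form := PlanarGluing.boundaryCoeff_succ_mul_factorial n q
  rw [← RootedQuadWB.card_quot_quadIso hp] at closed_form
  exact_mod_cast closed_form
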